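/- arXiv:math/0411443 — 5 statements merged into one kernel-verified Lean document; each statement's English description precedes it below -/
import Mathlib

section
/- Let R_1 = {x + iy ∈ ℂ : 0 < x < 2√2·π, 0 < y < 2π}, R_2 = {x + iy ∈ ℂ : 0 < x < 2√2·π, 2π < y < 4π}, and Ω = R_1 ∪ R_2. Define F : Ω → ℂ by F(z) = √2·i·z + 2√2·π for z ∈ R_1 and F(z) = √2·i·z + 4√2·π for z ∈ R_2. Then F has a dense orbit in Ω: there exists a sequence {p_n}_{n=0}^∞ ⊂ Ω with F(p_n) = p_{n+1} for all n such that {p_n} is dense in Ω. Moreover, given any dense open subset W ⊂ Ω, the sequence {p_n} can be chosen to be contained in W. -/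
/-- The open rectangle `R₁` with corners `0` and `2√2·π + 2π·i`. -/
def R1 : Set ℂ :=
  {z | 0 < z.re ∧ z.re < 2 * Real.sqrt 2 * Real.pi ∧ 0 < z.im ∧ z.im < 2 * Real.pi}

/-- The open rectangle `R₂` with corners `2π·i` and `2√2·π + 4π·i`. -/
def R2 : Set ℂ :=
  {z | 0 < z.re ∧ z.re < 2 * Real.sqrt 2 * Real.pi ∧
       2 * Real.pi < z.im ∧ z.im < 4 * Real.pi}

open scoped Classical in
/-- The expanding map `F` of Step 1: `F(z) = √2·i·z + 2√2·π` on `R₁` and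
`F(z) = √2·i·z + 4√2·π` on `R₂`. -/
noncomputable def Fstep (z : ℂ) : ℂ :=
  if z ∈ R1 then (Real.sqrt 2 : ℂ) * Complex.I * z + 2 * (Real.sqrt 2 : ℂ) * (Real.pi : ℂ)
  else (Real.sqrt 2 : ℂ) * Complex.I * z + 4 * (Real.sqrt 2 : ℂ) * (Real.pi : ℂ)

/-!
The domain `Ω` of the map `F = Fstep` is a dense open part of the open rectangle `R`, and every
point `z` of `Ω` lies on an inverse branch defined on all of `R` and contracting by `√2`: any
`w ∈ R` has a preimage `z' ∈ Ω` with `√2 * dist z z' ≤ dist (F z) w`. This implies: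

* A set `V` meeting `R` with `F⁻¹ V ⊆ V` is dense in `R`: writing `S = R ∩ V`, pulling points of `S`
  back along inverse branches gives `√2 * infDist z S ≤ infDist (F z) S`, so the supremum of
  `infDist · S` over `R`, being finite, is zero. The orbit of a generic point therefore visits any
  given open set meeting `R`.
* Preimages of sets that are comeagre in `R` are comeagre in `R`, so the orbit of a generic point
  stays forever in any given comeagre set.

As the topology has a countable basis, a generic point has both properties for all basic open sets
at once, and by the Baire category theorem such a point exists.
-/

open Filter Set

section ResidualWithin

variable {X : Type*} [TopologicalSpace X] {R A : Set X}

/-- The filter of sets that are comeagre relative to `R`, by analogy with `nhdsWithin`. For open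
`R`, the only case of interest here, these are the sets whose trace on `R` is comeagre in the
subspace `R`. -/
abbrev residualWithin (R : Set X) : Filter X := residual X ⊓ 𝓟 R

lemma mem_residualWithin_of_isOpen (hA : IsOpen A) (hRA : R ⊆ closure A) :
    A ∈ residualWithin R := by
  have hdense : Dense (A ∪ (closure R)ᶜ) := fun z => by
    by_cases hz : z ∈ closure R
    · exact closure_mono subset_union_left (closure_minimal hRA isClosed_closure hz)
    · exact subset_closure (Or.inr hz)
  refine mem_inf_principal.2 (mem_of_superset (residual_of_dense_open
    (hA.union isClosed_closure.isOpen_compl) hdense) fun z hz hzR => ?_)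
  exact hz.resolve_right fun h => h (subset_closure hzR)

lemma residualWithin_neBot [BaireSpace X] (hR : IsOpen R) (hne : R.Nonempty) :
    (residualWithin R).NeBot :=
  inf_principal_neBot_iff.2 fun _ hA =>
    inter_comm R _ ▸ (dense_of_mem_residual hA).inter_open_nonempty R hR hne

end ResidualWithin

/-- A piecewise expanding map all of whose branches are full, such as `Fstep`: `f` is a continuous
map on a dense open subset `Ω` of the bounded open set `R`, and through each point of `Ω` there
passes an inverse branch that is defined on all of `R` and contracts distances from that point by
the factor `K > 1`. The values of `f` outside `Ω` are unconstrained. -/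
structure HasContractingInverseBranches {X : Type*} [PseudoMetricSpace X]
    (f : X → X) (K : ℝ) (Ω R : Set X) : Prop where
  one_lt : 1 < K
  isOpen_domain : IsOpen Ω
  isOpen_range : IsOpen R
  isBounded_range : Bornology.IsBounded R
  domain_subset : Ω ⊆ R
  subset_closure_domain : R ⊆ closure Ω
  continuousOn : ContinuousOn f Ω
  mapsTo : MapsTo f Ω R
  exists_preimage : ∀ z ∈ Ω, ∀ w ∈ R, ∃ z' ∈ Ω, f z' = w ∧ K * dist z z' ≤ dist (f z) w

namespace HasContractingInverseBranches

open Metric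

variable {X : Type*} [PseudoMetricSpace X] {f : X → X} {K : ℝ} {Ω R : Set X}

lemma mul_infDist_le {V : Set X} (hf : HasContractingInverseBranches f K Ω R)
    (hV : Ω ∩ f ⁻¹' V ⊆ V) (hne : (R ∩ V).Nonempty) {z : X} (hz : z ∈ Ω) :
    K * infDist z (R ∩ V) ≤ infDist (f z) (R ∩ V) := by
  refine (le_infDist hne).2 fun w hw => ?_
  obtain ⟨z', hz', rfl, hdist⟩ := hf.exists_preimage z hz w hw.1
  have hK : 0 ≤ K := zero_le_one.trans hf.one_lt.le
  have hz'V : z' ∈ R ∩ V := ⟨hf.domain_subset hz', hV ⟨hz', hw.2⟩⟩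
  exact (mul_le_mul_of_nonneg_left (infDist_le_dist_of_mem hz'V) hK).trans hdist

lemma subset_closure_of_preimage_subset {V : Set X} (hf : HasContractingInverseBranches f K Ω R)
    (hV : Ω ∩ f ⁻¹' V ⊆ V) (hne : (R ∩ V).Nonempty) : R ⊆ closure V := by
  set δ : X → ℝ := fun z => infDist z (R ∩ V)
  have hbdd : BddAbove (δ '' R) := by
    obtain ⟨w, hw⟩ := hne
    refine ⟨diam R, forall_mem_image.2 fun z hz => ?_⟩
    exact (infDist_le_dist_of_mem hw).trans (dist_le_diam_of_mem hf.isBounded_range hz hw.1)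
  have hδ_le {z : X} (hz : z ∈ R) : δ z ≤ sSup (δ '' R) := le_csSup hbdd (mem_image_of_mem δ hz)
  have hclosed : IsClosed {z | K * δ z ≤ sSup (δ '' R)} :=
    isClosed_le (continuous_const.mul (continuous_infDist_pt _)) continuous_const
  have hmul_le : R ⊆ {z | K * δ z ≤ sSup (δ '' R)} :=
    hf.subset_closure_domain.trans <| closure_minimal
      (fun z hz => (hf.mul_infDist_le hV hne hz).trans (hδ_le (hf.mapsTo hz))) hclosed
  have hsup : sSup (δ '' R) ≤ 0 := by
    have hK : 0 < K := zero_lt_one.trans hf.one_lt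
    have hsup_le : sSup (δ '' R) ≤ sSup (δ '' R) / K :=
      csSup_le ((hne.mono inter_subset_left).image δ) <| forall_mem_image.2 fun z hz =>
        (le_div_iff₀' hK).2 (hmul_le hz)
    rw [le_div_iff₀ hK] at hsup_le
    nlinarith [hf.one_lt]
  intro z hz
  have hzero : δ z = 0 := le_antisymm ((hδ_le hz).trans hsup) infDist_nonneg
  exact closure_mono inter_subset_right ((mem_closure_iff_infDist_zero hne).2 hzero)

lemma eventually_exists_iterate_mem {U : Set X} (hf : HasContractingInverseBranches f K Ω R)
    (hU : IsOpen U) (hne : (R ∩ U).Nonempty) :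
    ∀ᶠ z in residualWithin R, ∃ n, f^[n] z ∈ U := by
  set V : Set X := interior {z | ∃ n, f^[n] z ∈ U}
  have hUV : U ⊆ V := interior_maximal (fun z hz => ⟨0, hz⟩) hU
  have hV : Ω ∩ f ⁻¹' V ⊆ V :=
    interior_maximal (fun z hz => (interior_subset hz.2).imp' (· + 1) fun _ hn => hn)
      (hf.continuousOn.isOpen_inter_preimage hf.isOpen_domain isOpen_interior)
  refine mem_of_superset (mem_residualWithin_of_isOpen isOpen_interior ?_) interior_subset
  exact hf.subset_closure_of_preimage_subset hV (hne.mono (inter_subset_inter_right R hUV))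

lemma eventually_subset_closure_range_iterate [SecondCountableTopology X]
    (hf : HasContractingInverseBranches f K Ω R) :
    ∀ᶠ z in residualWithin R, R ⊆ closure (range fun n => f^[n] z) := by
  have hvisit : ∀ᶠ z in residualWithin R, ∀ U ∈ TopologicalSpace.countableBasis X,
      (R ∩ U).Nonempty → ∃ n, f^[n] z ∈ U :=
    (eventually_countable_ball (TopologicalSpace.countable_countableBasis X)).2 fun U hU =>
      eventually_imp_distrib_left.2 <| hf.eventually_exists_iterate_mem
        (TopologicalSpace.isOpen_of_mem_countableBasis hU)
  filter_upwards [hvisit] with z hz y hy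
  refine (TopologicalSpace.isBasis_countableBasis X).mem_closure_iff.2 fun U hU hyU => ?_
  obtain ⟨n, hn⟩ := hz U hU ⟨y, hy, hyU⟩
  exact ⟨_, hn, n, rfl⟩

lemma subset_closure_inter_preimage {A : Set X} (hf : HasContractingInverseBranches f K Ω R)
    (hA : Dense A) : R ⊆ closure (Ω ∩ f ⁻¹' A) := by
  refine hf.subset_closure_domain.trans (closure_minimal (fun z hz => ?_) isClosed_closure)
  refine Metric.mem_closure_iff.2 fun ε hε => ?_
  have hfz : f z ∈ closure (R ∩ A) := hA.open_subset_closure_inter hf.isOpen_range (hf.mapsTo hz)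
  obtain ⟨w, hw, hdist⟩ := Metric.mem_closure_iff.1 hfz ε hε
  obtain ⟨z', hz', rfl, hle⟩ := hf.exists_preimage z hz w hw.1
  refine ⟨z', ⟨hz', hw.2⟩, lt_of_le_of_lt ?_ (hle.trans_lt hdist)⟩
  exact le_mul_of_one_le_left dist_nonneg hf.one_lt.le

lemma domain_mem_residualWithin (hf : HasContractingInverseBranches f K Ω R) :
    Ω ∈ residualWithin R :=
  mem_residualWithin_of_isOpen hf.isOpen_domain hf.subset_closure_domain

lemma tendsto_residualWithin (hf : HasContractingInverseBranches f K Ω R) :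
    Tendsto f (residualWithin R) (residualWithin R) := by
  refine tendsto_inf.2 ⟨?_, tendsto_principal.2 ?_⟩
  · refine le_countableGenerate_iff_of_countableInterFilter.2 fun A ⟨hA, hdense⟩ => ?_
    have hopen := hf.continuousOn.isOpen_inter_preimage hf.isOpen_domain hA
    have hmem : Ω ∩ f ⁻¹' A ∈ residualWithin R :=
      mem_residualWithin_of_isOpen hopen (hf.subset_closure_inter_preimage hdense)
    exact mem_map.2 (mem_of_superset hmem inter_subset_right)
  · exact mem_of_superset hf.domain_mem_residualWithin hf.mapsTo

end HasContractingInverseBranches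

theorem Fstep_dense_orbit_general {X : Type*} [PseudoMetricSpace X] [SecondCountableTopology X]
    [BaireSpace X] {f : X → X} {K : ℝ} {Ω R W : Set X}
    (hf : HasContractingInverseBranches f K Ω R) (hR : R.Nonempty) (hW : W ∈ residualWithin R) :
    ∃ p : ℕ → X, (∀ n, p n ∈ W ∩ Ω) ∧ (∀ n, f (p n) = p (n + 1)) ∧ R ⊆ closure (range p) := by
  have := residualWithin_neBot hf.isOpen_range hR
  have hstay : ∀ᶠ z in residualWithin R, ∀ n, f^[n] z ∈ W ∩ Ω :=
    eventually_countable_forall.2 fun n =>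
      (hf.tendsto_residualWithin.iterate n).eventually (inter_mem hW hf.domain_mem_residualWithin)
  obtain ⟨z, hzW, hzdense⟩ := (hstay.and hf.eventually_subset_closure_range_iterate).exists
  exact ⟨fun n => f^[n] z, hzW, fun n => (Function.iterate_succ_apply' f n z).symm, hzdense⟩

section Fstep

open Complex
open scoped Real

/-- The open rectangle with corners `0` and `2√2·π + 4π·i`, onto which `Fstep` maps each of `R1`
and `R2`. -/
def bigRect : Set ℂ := Ioo 0 (2 * √2 * π) ×ℂ Ioo 0 (4 * π)

/-- The affine map which `Fstep` agrees with on `R1` (for `k = 2`) and on `R2` (for `k = 4`). -/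
noncomputable def Fbranch (k : ℝ) (z : ℂ) : ℂ := (√2 : ℂ) * I * z + k * (√2 : ℂ) * (π : ℂ)

lemma continuous_Fbranch (k : ℝ) : Continuous (Fbranch k) := by
  unfold Fbranch
  fun_prop

lemma dist_Fbranch (k : ℝ) (z w : ℂ) : dist (Fbranch k z) (Fbranch k w) = √2 * dist z w := by
  simp [Fbranch, dist_eq_norm, ← mul_sub]

lemma Fbranch_surjective (k : ℝ) : Function.Surjective (Fbranch k) := fun w => by
  have hslope : (√2 : ℂ) * I ≠ 0 := by simp
  refine ⟨(w - k * (√2 : ℂ) * (π : ℂ)) / (√2 * I), ?_⟩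
  rw [Fbranch, mul_div_cancel₀ _ hslope, sub_add_cancel]

lemma preimage_Fbranch_bigRect (k : ℝ) :
    Fbranch k ⁻¹' bigRect = Ioo 0 (2 * √2 * π) ×ℂ Ioo ((k - 2) * π) (k * π) := by
  ext z
  have hs : 0 < √2 := by positivity
  have hs2 : √2 * √2 = 2 := Real.mul_self_sqrt zero_le_two
  have hre : (Fbranch k z).re = √2 * (k * π - z.im) := by
    simp only [Fbranch, add_re, mul_re, ofReal_re, I_re, mul_zero, ofReal_im, I_im, mul_one,
      sub_self, zero_mul, mul_im, add_zero, zero_sub, sub_zero]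
    ring
  have him : (Fbranch k z).im = √2 * z.re := by simp [Fbranch]
  have hwidth : 2 * √2 * π = √2 * (2 * π) := by ring
  have hheight : 4 * π = √2 * (2 * √2 * π) := by linear_combination -2 * π * hs2
  simp only [bigRect, mem_preimage, mem_reProdIm, mem_Ioo, hre, him]
  rw [hheight, mul_lt_mul_iff_right₀ hs, mul_pos_iff_of_pos_left hs, mul_pos_iff_of_pos_left hs,
    hwidth, mul_lt_mul_iff_right₀ hs]
  constructor <;> rintro ⟨⟨h₁, h₂⟩, h₃, h₄⟩ <;> refine ⟨⟨?_, ?_⟩, ?_, ?_⟩ <;> linarith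

lemma R1_eq_reProdIm : R1 = Ioo 0 (2 * √2 * π) ×ℂ Ioo 0 (2 * π) := by
  ext z
  simp [R1, mem_reProdIm, and_assoc]

lemma R2_eq_reProdIm : R2 = Ioo 0 (2 * √2 * π) ×ℂ Ioo (2 * π) (4 * π) := by
  ext z
  simp [R2, mem_reProdIm, and_assoc]

lemma preimage_Fbranch_two : Fbranch 2 ⁻¹' bigRect = R1 := by
  rw [preimage_Fbranch_bigRect, R1_eq_reProdIm, sub_self, zero_mul]

lemma preimage_Fbranch_four : Fbranch 4 ⁻¹' bigRect = R2 := by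
  rw [preimage_Fbranch_bigRect, R2_eq_reProdIm]
  norm_num

lemma eqOn_Fstep_R1 : EqOn Fstep (Fbranch 2) R1 := fun z hz => by
  simp [Fstep, Fbranch, hz]

lemma eqOn_Fstep_R2 : EqOn Fstep (Fbranch 4) R2 := fun z hz => by
  have hz1 : z ∉ R1 := fun h => lt_asymm h.2.2.2 hz.2.2.1
  simp [Fstep, Fbranch, hz1]

lemma exists_Fbranch {z : ℂ} (hz : z ∈ R1 ∪ R2) :
    ∃ k, Fbranch k z ∈ bigRect ∧ Fbranch k ⁻¹' bigRect ⊆ R1 ∪ R2 ∧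
      EqOn Fstep (Fbranch k) (Fbranch k ⁻¹' bigRect) := by
  rcases hz with hz | hz
  · rw [← preimage_Fbranch_two] at hz
    exact ⟨2, hz, preimage_Fbranch_two ▸ subset_union_left, preimage_Fbranch_two ▸ eqOn_Fstep_R1⟩
  · rw [← preimage_Fbranch_four] at hz
    exact ⟨4, hz, preimage_Fbranch_four ▸ subset_union_right, preimage_Fbranch_four ▸ eqOn_Fstep_R2⟩

lemma isOpen_bigRect : IsOpen bigRect := isOpen_Ioo.reProdIm isOpen_Ioo

lemma bigRect_nonempty : bigRect.Nonempty := by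
  refine ⟨⟨√2 * π, 2 * π⟩, mem_reProdIm.2 ⟨⟨?_, ?_⟩, ?_, ?_⟩⟩ <;> dsimp only <;>
    linarith [Real.pi_pos, show 0 < √2 * π by positivity]

lemma union_subset_bigRect : R1 ∪ R2 ⊆ bigRect := by
  rintro z (⟨h₁, h₂, h₃, h₄⟩ | ⟨h₁, h₂, h₃, h₄⟩) <;>
    refine ⟨⟨h₁, h₂⟩, ?_, ?_⟩ <;> linarith [Real.pi_pos]

lemma bigRect_subset_closure : bigRect ⊆ closure (R1 ∪ R2) := by
  have hpi := Real.pi_pos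
  rw [closure_union, R1_eq_reProdIm, R2_eq_reProdIm, closure_reProdIm, closure_reProdIm,
    closure_Ioo (by positivity), closure_Ioo (by positivity), closure_Ioo (by linarith)]
  rintro z ⟨⟨h₁, h₂⟩, h₃, h₄⟩
  exact (le_total z.im (2 * π)).imp (fun h => ⟨⟨h₁.le, h₂.le⟩, h₃.le, h⟩)
    fun h => ⟨⟨h₁.le, h₂.le⟩, h, h₄.le⟩

lemma continuousOn_Fstep : ContinuousOn Fstep (R1 ∪ R2) := fun z hz => by
  obtain ⟨k, hkz, -, heq⟩ := exists_Fbranch hz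
  have hnhds := (isOpen_bigRect.preimage (continuous_Fbranch k)).mem_nhds hkz
  exact ((continuous_Fbranch k).continuousAt.congr
    (heq.symm.eventuallyEq_of_mem hnhds)).continuousWithinAt

lemma mapsTo_Fstep : MapsTo Fstep (R1 ∪ R2) bigRect := fun z hz => by
  obtain ⟨k, hkz, -, heq⟩ := exists_Fbranch hz
  rwa [heq hkz]

lemma exists_Fstep_eq {z w : ℂ} (hz : z ∈ R1 ∪ R2) (hw : w ∈ bigRect) :
    ∃ z' ∈ R1 ∪ R2, Fstep z' = w ∧ dist (Fstep z) w = √2 * dist z z' := by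
  obtain ⟨k, hkz, hsub, heq⟩ := exists_Fbranch hz
  obtain ⟨z', rfl⟩ := Fbranch_surjective k w
  exact ⟨z', hsub hw, heq hw, by rw [heq hkz, dist_Fbranch]⟩

lemma hasContractingInverseBranches_Fstep :
    HasContractingInverseBranches Fstep √2 (R1 ∪ R2) bigRect where
  one_lt := Real.one_lt_sqrt_two
  isOpen_domain := by
    rw [R1_eq_reProdIm, R2_eq_reProdIm]
    exact (isOpen_Ioo.reProdIm isOpen_Ioo).union (isOpen_Ioo.reProdIm isOpen_Ioo)
  isOpen_range := isOpen_bigRect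
  isBounded_range := (Metric.isBounded_Ioo _ _).reProdIm (Metric.isBounded_Ioo _ _)
  domain_subset := union_subset_bigRect
  subset_closure_domain := bigRect_subset_closure
  continuousOn := continuousOn_Fstep
  mapsTo := mapsTo_Fstep
  exists_preimage _ hz _ hw :=
    let ⟨z', hz', heq, hdist⟩ := exists_Fstep_eq hz hw
    ⟨z', hz', heq, hdist.ge⟩

end Fstep

/-- **Step 1 of Theorem 1.2.** The map `F` on `Ω = R₁ ∪ R₂` has a dense orbit in `Ω`;
moreover, given any dense open subset `W ⊆ Ω`, the orbit can be chosen inside `W`. -/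
theorem Fstep_dense_orbit (W : Set ℂ) (hWopen : IsOpen W) (hWsub : W ⊆ R1 ∪ R2)
    (hWdense : R1 ∪ R2 ⊆ closure W) :
    ∃ p : ℕ → ℂ, (∀ n, p n ∈ W) ∧ (∀ n, Fstep (p n) = p (n + 1)) ∧
      R1 ∪ R2 ⊆ closure (Set.range p) := by
  have hW : W ∈ residualWithin bigRect := mem_residualWithin_of_isOpen hWopen
    (bigRect_subset_closure.trans (closure_minimal hWdense isClosed_closure))
  obtain ⟨p, hpW, hp, hdense⟩ :=
    Fstep_dense_orbit_general hasContractingInverseBranches_Fstep bigRect_nonempty hW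
  exact ⟨p, fun n => (hpW n).1, hp, union_subset_bigRect.trans hdense⟩
end

section
/- Let R_1 = {x + iy ∈ ℂ : 0 < x < 2√2·π, 0 < y < 2π}, R_2 = {x + iy ∈ ℂ : 0 < x < 2√2·π, 2π < y < 4π}, and Ω = R_1 ∪ R_2. Define F : Ω → ℂ by F(z) = √2·i·z + 2√2·π for z ∈ R_1 and F(z) = √2·i·z + 4√2·π for z ∈ R_2. Then for every point p ∈ Ω and every open neighborhood U ⊂ Ω of p, there exist a nonempty connected open subset V ⊂ U and an integer N ≥ 1 such that F^j(V) ⊂ Ω for each 1 ≤ j ≤ N, F^N(V) equals R_1 or R_2, and consequently Ω ⊂ F^{N+1}(V). -/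
/-!
The branches `z ↦ √2·i·z + 2√2πk`, `k = 1, 2`, carry `R_k` onto the box `(0, 2√2π) × (0, 4π)`, which
contains `Ω = R₁ ∪ R₂` and has the same closure. Their inverses therefore contract by `1/√2`, map
`Ω` into itself, and send `closure Ω` onto the closures of `R₁` and `R₂`, which cover `closure Ω`.
So every `p ∈ closure Ω` lies in the image of `closure Ω` under compositions of any number `n` of
inverse branches; for large `n` that image is inside a given neighborhood of `p`, and the image of
`R_k` under the same composition is the required set. Passing to closures lets one follow `p` even
when its orbit meets the common side of the rectangles: `p` itself need not lie in `V`.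
-/

open Set Filter Topology
open scoped NNReal

section InverseBranch

variable {X : Type*} [PseudoEMetricSpace X] {F : X → X} {Ω K : Set X} {r : ℝ≥0}

/-- An inverse branch over `Ω` of the `n`-th iterate of `F`, with Lipschitz constant `r`, along
which forward orbits stay in `Ω`. It is a total map, but it inverts `F^[n]` only over `Ω`. -/
structure IsInverseBranch (F : X → X) (Ω : Set X) (n : ℕ) (r : ℝ≥0) (ψ : X → X) : Prop where
  lipschitzWith : LipschitzWith r ψ
  isOpenMap : IsOpenMap ψ
  mapsTo_iterate : ∀ j ≤ n, MapsTo (F^[j] ∘ ψ) Ω Ω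
  leftInvOn : LeftInvOn F^[n] ψ Ω

namespace IsInverseBranch

protected lemma id : IsInverseBranch F Ω 0 1 id where
  lipschitzWith := .id
  isOpenMap := .id
  mapsTo_iterate j hj := by simp [Nat.le_zero.1 hj, mapsTo_id]
  leftInvOn _ _ := rfl

lemma mapsTo {n : ℕ} {ψ : X → X} (hψ : IsInverseBranch F Ω n r ψ) : MapsTo ψ Ω Ω :=
  hψ.mapsTo_iterate 0 n.zero_le

lemma comp {m n : ℕ} {s : ℝ≥0} {ψ χ : X → X} (hψ : IsInverseBranch F Ω m r ψ)
    (hχ : IsInverseBranch F Ω n s χ) : IsInverseBranch F Ω (n + m) (r * s) (ψ ∘ χ) where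
  lipschitzWith := hψ.lipschitzWith.comp hχ.lipschitzWith
  isOpenMap := hψ.isOpenMap.comp hχ.isOpenMap
  mapsTo_iterate j hj z hz := by
    rcases le_total j m with hjm | hmj
    · exact hψ.mapsTo_iterate j hjm (hχ.mapsTo hz)
    · obtain ⟨i, rfl⟩ := Nat.exists_eq_add_of_le' hmj
      have hreturn : F^[m] (ψ (χ z)) = χ z := hψ.leftInvOn (hχ.mapsTo hz)
      simpa only [Function.comp_apply, Function.iterate_add_apply, hreturn]
        using hχ.mapsTo_iterate i (by lia) hz
  leftInvOn := by
    rw [Function.iterate_add]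
    exact hχ.leftInvOn.comp hψ.leftInvOn hχ.mapsTo

variable {n : ℕ} {ψ : X → X} {S : Set X}

lemma iterate_image_subset (hψ : IsInverseBranch F Ω n r ψ) (hS : S ⊆ Ω) {j : ℕ} (hj : j ≤ n) :
    F^[j] '' (ψ '' S) ⊆ Ω := by
  rw [← image_comp]
  exact ((hψ.mapsTo_iterate j hj).mono_left hS).image_subset

lemma iterate_image_eq (hψ : IsInverseBranch F Ω n r ψ) (hS : S ⊆ Ω) : F^[n] '' (ψ '' S) = S :=
  hψ.leftInvOn.image_image' hS

end IsInverseBranch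

lemma exists_isInverseBranch_iterate
    (hcover : ∀ p ∈ K, ∃ ψ, IsInverseBranch F Ω 1 r ψ ∧ p ∈ ψ '' K) (n : ℕ) :
    ∀ p ∈ K, ∃ ψ, IsInverseBranch F Ω n (r ^ n) ψ ∧ p ∈ ψ '' K := by
  induction n with
  | zero => exact fun p hp => ⟨id, by simpa only [pow_zero] using .id, by rwa [image_id]⟩
  | succ n ih =>
    intro p hp
    obtain ⟨ψ, hψ, q, hq, rfl⟩ := hcover p hp
    obtain ⟨χ, hχ, hqχ⟩ := ih q hq
    refine ⟨ψ ∘ χ, ?_, ?_⟩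
    · simpa only [pow_succ'] using hψ.comp hχ
    · rw [image_comp]
      exact mem_image_of_mem ψ hqχ

end InverseBranch

lemma eventually_exists_isInverseBranch_image_subset {X : Type*} [PseudoMetricSpace X] {F : X → X}
    {Ω K : Set X} {r : ℝ≥0} (hK : Bornology.IsBounded K) (hr : r < 1)
    (hcover : ∀ p ∈ K, ∃ ψ, IsInverseBranch F Ω 1 r ψ ∧ p ∈ ψ '' K) {p : X} (hp : p ∈ K)
    {U : Set X} (hU : U ∈ 𝓝 p) :
    ∀ᶠ n in atTop, ∃ ψ, IsInverseBranch F Ω n (r ^ n) ψ ∧ ψ '' K ⊆ U := by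
  obtain ⟨ε, hε, hball⟩ := Metric.mem_nhds_iff.1 hU
  have hlim : Tendsto (fun n : ℕ => (r : ℝ) ^ n * Metric.diam K) atTop (𝓝 0) := by
    simpa only [zero_mul] using
      (tendsto_pow_atTop_nhds_zero_of_lt_one r.coe_nonneg hr).mul_const (Metric.diam K)
  filter_upwards [hlim.eventually_lt_const hε] with n hn
  obtain ⟨ψ, hψ, q, hq, rfl⟩ := exists_isInverseBranch_iterate hcover n p hp
  refine ⟨ψ, hψ, ?_⟩
  rintro _ ⟨z, hz, rfl⟩
  refine hball (Metric.mem_ball.2 ?_)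
  calc dist (ψ z) (ψ q) ≤ (r : ℝ) ^ n * dist z q := by
        simpa only [NNReal.coe_pow] using hψ.lipschitzWith.dist_le_mul z q
    _ ≤ (r : ℝ) ^ n * Metric.diam K := by
        gcongr
        exact Metric.dist_le_diam_of_mem hK hz hq
    _ < ε := hn

/-- The open rectangle `(0, 2√2π) × (2π(k - 1), 2πk)`, which is `R_k` for `k = 1, 2`. -/
def rectangle (k : ℝ) : Set ℂ :=
  Ioo 0 (2 * √2 * Real.pi) ×ℂ Ioo (2 * Real.pi * (k - 1)) (2 * Real.pi * k)

/-- The open rectangle `(0, 2√2π) × (0, 4π)`, onto which `Fstep` maps both `R₁` and `R₂`. -/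
def box : Set ℂ :=
  Ioo 0 (2 * √2 * Real.pi) ×ℂ Ioo 0 (4 * Real.pi)

/-- The affine homeomorphism `z ↦ √2·i·z + 2√2πk`, which is `Fstep` on `R_k` for `k = 1, 2`. -/
noncomputable def branch (k : ℝ) : ℂ ≃ₜ ℂ :=
  (Homeomorph.mulLeft₀ ((√2 : ℂ) * Complex.I) (by simp)).trans
    (Homeomorph.addRight ((2 * √2 * Real.pi * k : ℝ) : ℂ))

lemma R1_eq_rectangle : R1 = rectangle 1 := by
  ext z
  simp [R1, rectangle, Complex.mem_reProdIm, and_assoc]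

lemma R2_eq_rectangle : R2 = rectangle 2 := by
  ext z
  have hleft : 2 * Real.pi * (2 - 1) = 2 * Real.pi := by ring
  have hright : 2 * Real.pi * 2 = 4 * Real.pi := by ring
  simp [R2, rectangle, Complex.mem_reProdIm, and_assoc, hleft, hright]

lemma isOpen_rectangle (k : ℝ) : IsOpen (rectangle k) :=
  isOpen_Ioo.reProdIm isOpen_Ioo

lemma isConnected_rectangle (k : ℝ) : IsConnected (rectangle k) := by
  refine ⟨by simp [rectangle, Real.pi_pos], ?_⟩
  exact (((convex_Ioo _ _).linear_preimage Complex.reLm).inter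
    ((convex_Ioo _ _).linear_preimage Complex.imLm)).isPreconnected

lemma isBounded_box : Bornology.IsBounded box :=
  (Metric.isBounded_Ioo _ _).reProdIm (Metric.isBounded_Ioo _ _)

lemma R1_union_R2_subset_box : R1 ∪ R2 ⊆ box := by
  have hpi := Real.pi_pos
  rintro z (⟨hre, hre', him, him'⟩ | ⟨hre, hre', him, him'⟩) <;>
    exact ⟨⟨hre, hre'⟩, by linarith, by linarith⟩

lemma closure_rectangle (k : ℝ) :
    closure (rectangle k) =
      Icc 0 (2 * √2 * Real.pi) ×ℂ Icc (2 * Real.pi * (k - 1)) (2 * Real.pi * k) := by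
  have hpi := Real.pi_pos
  rw [rectangle, Complex.closure_reProdIm, closure_Ioo (by positivity), closure_Ioo (by linarith)]

lemma closure_box : closure box = Icc 0 (2 * √2 * Real.pi) ×ℂ Icc 0 (4 * Real.pi) := by
  rw [box, Complex.closure_reProdIm, closure_Ioo (by positivity), closure_Ioo (by positivity)]

lemma closure_R1_union_R2 : closure (R1 ∪ R2) = closure box := by
  refine (closure_mono R1_union_R2_subset_box).antisymm fun z hz => ?_
  rw [closure_box] at hz
  obtain ⟨hre, him, him'⟩ := hz
  rw [closure_union, R1_eq_rectangle, R2_eq_rectangle, closure_rectangle, closure_rectangle]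
  rcases le_total z.im (2 * Real.pi) with h | h
  · exact .inl ⟨hre, by linarith, by linarith⟩
  · exact .inr ⟨hre, by linarith, by linarith⟩

lemma rectangle_subset_R1_union_R2 {k : ℝ} (hk : k = 1 ∨ k = 2) : rectangle k ⊆ R1 ∪ R2 := by
  rcases hk with rfl | rfl
  · exact R1_eq_rectangle ▸ subset_union_left
  · exact R2_eq_rectangle ▸ subset_union_right

lemma branch_apply (k : ℝ) (z : ℂ) :
    branch k z = (√2 : ℂ) * Complex.I * z + ((2 * √2 * Real.pi * k : ℝ) : ℂ) :=
  rfl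

lemma branch_re (k : ℝ) (z : ℂ) : (branch k z).re = √2 * (2 * Real.pi * k - z.im) := by
  rw [branch_apply, Complex.add_re, Complex.ofReal_re, mul_assoc, Complex.re_ofReal_mul,
    Complex.I_mul_re]
  ring

lemma branch_im (k : ℝ) (z : ℂ) : (branch k z).im = √2 * z.re := by
  simp [branch_apply]

lemma dist_branch (k : ℝ) (z w : ℂ) : dist (branch k z) (branch k w) = √2 * dist z w := by
  simp [branch_apply, dist_eq_norm, ← mul_sub]

lemma lipschitzWith_branch_symm (k : ℝ) :
    LipschitzWith (NNReal.sqrt 2)⁻¹ (branch k).symm := by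
  refine AntilipschitzWith.to_rightInverse (f := branch k) ?_ (branch k).apply_symm_apply
  refine .of_le_mul_dist fun z w => ?_
  rw [dist_branch]
  simp

lemma preimage_branch_box (k : ℝ) : branch k ⁻¹' box = rectangle k := by
  ext z
  have hscale (x b : ℝ) : √2 * x ∈ Ioo 0 (√2 * b) ↔ x ∈ Ioo 0 b := by
    have hsqrt : 0 < √2 := by positivity
    rw [mem_Ioo, mem_Ioo, mul_pos_iff_of_pos_left hsqrt, mul_lt_mul_iff_right₀ hsqrt]
  have hwidth : 2 * √2 * Real.pi = √2 * (2 * Real.pi) := by ring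
  have hheight : 4 * Real.pi = √2 * (2 * √2 * Real.pi) := by
    linear_combination (-2 * Real.pi) * Real.mul_self_sqrt (zero_le_two (α := ℝ))
  have him_iff : (branch k z).im ∈ Ioo 0 (4 * Real.pi) ↔ z.re ∈ Ioo 0 (2 * √2 * Real.pi) := by
    rw [branch_im, hheight, hscale]
  have hre_iff : (branch k z).re ∈ Ioo 0 (2 * √2 * Real.pi) ↔
      z.im ∈ Ioo (2 * Real.pi * (k - 1)) (2 * Real.pi * k) := by
    rw [branch_re, hwidth, hscale, mem_Ioo, mem_Ioo, sub_pos, sub_lt_comm, and_comm, mul_sub_one]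
  rw [mem_preimage, box, rectangle, Complex.mem_reProdIm, Complex.mem_reProdIm, him_iff, hre_iff,
    and_comm]

lemma image_branch_rectangle (k : ℝ) : branch k '' rectangle k = box := by
  rw [← preimage_branch_box, image_preimage_eq _ (branch k).surjective]

lemma image_branch_symm_box (k : ℝ) : (branch k).symm '' box = rectangle k := by
  rw [(branch k).image_symm, preimage_branch_box]

lemma eqOn_Fstep_branch {k : ℝ} (hk : k = 1 ∨ k = 2) : EqOn Fstep (branch k) (rectangle k) := by
  intro z hz
  rcases hk with rfl | rfl
  · rw [← R1_eq_rectangle] at hz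
    simp [Fstep, hz, branch_apply]
  · rw [← R2_eq_rectangle] at hz
    have hzR1 : z ∉ R1 := fun h => hz.2.2.1.not_gt h.2.2.2
    simp only [Fstep, hzR1, if_false, branch_apply]
    push_cast
    ring

lemma image_Fstep_rectangle {k : ℝ} (hk : k = 1 ∨ k = 2) : Fstep '' rectangle k = box := by
  rw [(eqOn_Fstep_branch hk).image_eq, image_branch_rectangle]

lemma isInverseBranch_branch_symm {k : ℝ} (hk : k = 1 ∨ k = 2) :
    IsInverseBranch Fstep (R1 ∪ R2) 1 (NNReal.sqrt 2)⁻¹ (branch k).symm := by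
  have hrect : MapsTo (branch k).symm (R1 ∪ R2) (rectangle k) := by
    rw [mapsTo_iff_image_subset, ← image_branch_symm_box]
    exact image_mono R1_union_R2_subset_box
  have hinv : LeftInvOn Fstep (branch k).symm (R1 ∪ R2) := fun w hw => by
    rw [eqOn_Fstep_branch hk (hrect hw), Homeomorph.apply_symm_apply]
  refine ⟨lipschitzWith_branch_symm k, (branch k).symm.isOpenMap, fun j hj w hw => ?_, hinv⟩
  interval_cases j
  · exact rectangle_subset_R1_union_R2 hk (hrect hw)
  · simpa only [Function.comp_apply, Function.iterate_one, hinv hw] using hw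

lemma exists_isInverseBranch_mem_image_closure (p : ℂ) (hp : p ∈ closure (R1 ∪ R2)) :
    ∃ ψ, IsInverseBranch Fstep (R1 ∪ R2) 1 (NNReal.sqrt 2)⁻¹ ψ ∧ p ∈ ψ '' closure (R1 ∪ R2) := by
  obtain ⟨k, hk, hpk⟩ : ∃ k : ℝ, (k = 1 ∨ k = 2) ∧ p ∈ closure (rectangle k) := by
    rw [closure_union, R1_eq_rectangle, R2_eq_rectangle] at hp
    exact hp.elim (⟨1, .inl rfl, ·⟩) (⟨2, .inr rfl, ·⟩)
  refine ⟨(branch k).symm, isInverseBranch_branch_symm hk, ?_⟩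
  rwa [closure_R1_union_R2, Homeomorph.image_closure, image_branch_symm_box]

theorem Fstep_eventually_covers_general {p : ℂ} (hp : p ∈ closure (R1 ∪ R2)) {U : Set ℂ}
    (hU : U ∈ 𝓝 p) {R : Set ℂ} (hR : R = R1 ∨ R = R2) :
    ∀ᶠ N in atTop, ∃ V ⊆ U, IsOpen V ∧ IsConnected V ∧
      (∀ j ≤ N, Fstep^[j] '' V ⊆ R1 ∪ R2) ∧ Fstep^[N] '' V = R ∧
      R1 ∪ R2 ⊆ Fstep^[N + 1] '' V := by
  obtain ⟨k, hk, rfl⟩ : ∃ k : ℝ, (k = 1 ∨ k = 2) ∧ R = rectangle k :=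
    hR.elim (⟨1, .inl rfl, ·.trans R1_eq_rectangle⟩) (⟨2, .inr rfl, ·.trans R2_eq_rectangle⟩)
  have hsub : rectangle k ⊆ R1 ∪ R2 := rectangle_subset_R1_union_R2 hk
  have hbounded : Bornology.IsBounded (closure (R1 ∪ R2)) :=
    (isBounded_box.subset R1_union_R2_subset_box).closure
  have hratio : (NNReal.sqrt 2)⁻¹ < 1 := inv_lt_one_of_one_lt₀ <| by
    simpa only [NNReal.sqrt_one] using NNReal.sqrt_lt_sqrt.2 one_lt_two
  filter_upwards [eventually_exists_isInverseBranch_image_subset hbounded hratio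
    exists_isInverseBranch_mem_image_closure hp hU] with N ⟨ψ, hψ, hψU⟩
  have himage : Fstep^[N] '' (ψ '' rectangle k) = rectangle k := hψ.iterate_image_eq hsub
  refine ⟨ψ '' rectangle k, (image_mono (hsub.trans subset_closure)).trans hψU,
    hψ.isOpenMap _ (isOpen_rectangle k),
    (isConnected_rectangle k).image ψ hψ.lipschitzWith.continuous.continuousOn,
    fun j hj => hψ.iterate_image_subset hsub hj, himage, ?_⟩
  rw [Function.iterate_succ', image_comp, himage, image_Fstep_rectangle hk]
  exact R1_union_R2_subset_box

/-- **Step 1 of Theorem 1.2** (expansion property).  For every `p ∈ Ω = R₁ ∪ R₂` and every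
open neighborhood `U ⊆ Ω` of `p` there are a nonempty connected open subset `V ⊆ U` and an
integer `N ≥ 1` such that `F^j(V) ⊆ Ω` for `1 ≤ j ≤ N`, `F^N(V)` equals `R₁` or `R₂`, and
consequently `Ω ⊆ F^{N+1}(V)`. -/
theorem Fstep_eventually_covers (p : ℂ) (hp : p ∈ R1 ∪ R2)
    (U : Set ℂ) (hUopen : IsOpen U) (hUsub : U ⊆ R1 ∪ R2) (hpU : p ∈ U) :
    ∃ (V : Set ℂ) (N : ℕ),
      V ⊆ U ∧ V.Nonempty ∧ IsOpen V ∧ IsConnected V ∧ 1 ≤ N ∧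
      (∀ j, 1 ≤ j → j ≤ N → Fstep^[j] '' V ⊆ R1 ∪ R2) ∧
      (Fstep^[N] '' V = R1 ∨ Fstep^[N] '' V = R2) ∧
      R1 ∪ R2 ⊆ Fstep^[N + 1] '' V := by
  obtain ⟨N, ⟨V, hVU, hVopen, hVconn, hVj, hVN, hcover⟩, hN⟩ :=
    ((Fstep_eventually_covers_general (subset_closure hp) (hUopen.mem_nhds hpU) (.inl rfl)).and
      (eventually_ge_atTop 1)).exists
  exact ⟨V, N, hVU, hVconn.nonempty, hVopen, hVconn, hN, fun j _ => hVj j, .inl hVN, hcover⟩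
end

section
/- Let φ : ℂ^{m−1} × ℝ → ℝ be Lipschitz with constant c > 0 and let Ω = {(z, u + iv) ∈ ℂ^{m−1} × ℂ : u < φ(z, v)}. Let (α, β) ∈ ℂ^{m−1} × ℝ with ‖(α, β)‖ < 1/c. Then for every point (z_0, u_0 + i v_0) in the closure of Ω and every t > 0, the translated point (z_0, u_0 + i v_0) − t·(α, 1 + iβ) = (z_0 − tα, (u_0 − t) + i(v_0 − tβ)) lies in Ω. In particular, for each fixed t > 0 the affine holomorphic map H_{t,α,β}(z, w) = (z − tα, w − t(1 + iβ)) maps Ω into Ω. -/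
/-!
By continuity of `φ`, a point `(z, u + iv)` of the closure of `Ω` satisfies `u ≤ φ (z, v)`.
Translating by `-t (α, 1 + iβ)` lowers `u` by exactly `t`, whereas the Lipschitz bound lets `φ`
drop by at most `c * t * ‖(α, β)‖ < t`, so the inequality becomes strict.
-/

/-- The domain `Ω = {(z, u + iv) : u < φ (z, v)}` below the graph of `φ`, the real part of the last
coordinate being the dependent variable. -/
def subgraphDomain {E : Type*} (φ : E × ℝ → ℝ) : Set (E × ℂ) :=
  {q | q.2.re < φ (q.1, q.2.im)}

/-- The affine map `H_{t,α,β} (z, w) = (z - tα, w - t (1 + iβ))`. A real vector space `E`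
stands in for `ℂ^{m-1}`, since only real scalars `t` act on it. -/
def downwardTranslation {E : Type*} [AddCommGroup E] [Module ℝ E] (α : E) (β t : ℝ) (q : E × ℂ) :
    E × ℂ :=
  (q.1 - t • α, q.2 - (t : ℂ) * (1 + (β : ℂ) * Complex.I))

theorem closure_subgraphDomain_subset {E : Type*} [TopologicalSpace E] {φ : E × ℝ → ℝ}
    (hφ : Continuous φ) :
    closure (subgraphDomain φ) ⊆ {q | q.2.re ≤ φ (q.1, q.2.im)} :=
  closure_lt_subset_le (by fun_prop) (by fun_prop)

theorem downwardTranslation_mem_subgraphDomain_iff {E : Type*} [AddCommGroup E] [Module ℝ E]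
    {φ : E × ℝ → ℝ} {α : E} {β t : ℝ} {q : E × ℂ} :
    downwardTranslation α β t q ∈ subgraphDomain φ ↔
      q.2.re - t < φ ((q.1, q.2.im) - t • (α, β)) := by
  simp [downwardTranslation, subgraphDomain]

theorem sub_lt_map_sub_of_lipschitzWith {V : Type*} [SeminormedAddCommGroup V] {c : NNReal}
    {f : V → ℝ} (hf : LipschitzWith c f) {x a : V} {u s : ℝ} (hu : u ≤ f x) (ha : c * ‖a‖ < s) :
    u - s < f (x - a) := by
  have hdrop : f x ≤ f (x - a) + c * ‖a‖ := by
    simpa [dist_eq_norm] using hf.le_add_mul x (x - a)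
  linarith

theorem translation_into_lipschitz_subgraph_general {E : Type*} [SeminormedAddCommGroup E]
    [NormedSpace ℝ E] {c : NNReal} {φ : E × ℝ → ℝ} (hφ : LipschitzWith c φ) {α : E} {β t : ℝ}
    (hαβ : c * ‖(α, β)‖ < 1) (ht : 0 < t) :
    Set.MapsTo (downwardTranslation α β t) (closure (subgraphDomain φ)) (subgraphDomain φ) := by
  intro q hq
  have hle : q.2.re ≤ φ (q.1, q.2.im) := closure_subgraphDomain_subset hφ.continuous hq
  have hdrop : c * ‖t • (α, β)‖ < t := by
    calc c * ‖t • (α, β)‖ = t * (c * ‖(α, β)‖) := by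
          rw [norm_smul, Real.norm_of_nonneg ht.le, mul_left_comm]
      _ < t := mul_lt_of_lt_one_right ht hαβ
  exact downwardTranslation_mem_subgraphDomain_iff.2 (sub_lt_map_sub_of_lipschitzWith hφ hle hdrop)

/-- **The translation property from the proof of Theorem 1.5.** Let `φ : ℂ^{m-1} × ℝ → ℝ`
be Lipschitz with constant `c > 0` and `Ω = {(z, u+iv) : u < φ(z, v)}`.  If
`‖(α, β)‖ < 1/c`, then translating any point of the closure of `Ω` by `−t·(α, 1+iβ)`,
`t > 0`, lands in `Ω`; in particular each affine holomorphic map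
`H_{t,α,β}(z, w) = (z − tα, w − t(1+iβ))` maps `Ω` into `Ω`. -/
theorem translation_into_lipschitz_subgraph {n : ℕ} (c : NNReal) (hc : 0 < c)
    (φ : EuclideanSpace ℂ (Fin n) × ℝ → ℝ) (hφ : LipschitzWith c φ)
    (α : EuclideanSpace ℂ (Fin n)) (β : ℝ) (hαβ : ‖(α, β)‖ < 1 / (c : ℝ)) :
    (∀ p ∈ closure {q : EuclideanSpace ℂ (Fin n) × ℂ | q.2.re < φ (q.1, q.2.im)},
      ∀ t : ℝ, 0 < t →
        (p.1 - t • α, p.2 - (t : ℂ) * (1 + (β : ℂ) * Complex.I)) ∈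
          {q : EuclideanSpace ℂ (Fin n) × ℂ | q.2.re < φ (q.1, q.2.im)}) ∧
    (∀ t : ℝ, 0 < t →
      (fun q : EuclideanSpace ℂ (Fin n) × ℂ =>
          (q.1 - t • α, q.2 - (t : ℂ) * (1 + (β : ℂ) * Complex.I))) ''
        {q | q.2.re < φ (q.1, q.2.im)} ⊆ {q | q.2.re < φ (q.1, q.2.im)}) := by
  have hmul : c * ‖(α, β)‖ < 1 := (lt_div_iff₀' (NNReal.coe_pos.2 hc)).1 hαβ
  have hmaps {t : ℝ} (ht : 0 < t) := translation_into_lipschitz_subgraph_general hφ hmul ht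
  exact ⟨fun _ hp _ ht ↦ hmaps ht hp, fun _ ht ↦ ((hmaps ht).mono_left subset_closure).image_subset⟩
end

section
/- Let U ⊂ ℂ^m be a bounded domain and let F : U → U be a biholomorphic automorphism of U such that for some strictly increasing sequence of positive integers n_k, the iterates F^{n_k} converge locally uniformly on U to the identity map. Then F has no dense orbit: for every p ∈ U, the orbit {F^n(p) : n ≥ 0} is not dense in U (indeed its closure is nowhere dense in U). -/
/-!
By the Schwarz lemma the iterates of `F` are equicontinuous on the bounded open set `U`, and
`F^{n_k} → id` makes every point of `U` recurrent. The rest is topological dynamics on the locally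
compact space `U`. Equicontinuity makes the closure `C` in `U` of the orbit of a point `p` minimal:
the orbit of every point of `C` accumulates at `p`. Hence the points of `C` in a compact
neighbourhood of `p` return to it within a bounded time, so `C` is compact. If moreover `C` has an
interior point, then every point of `C` is moved into the interior of `C` by some iterate, and
recurrence pulls a neighbourhood of that point back into `C`, so `C` is open. But a nonzero complex
normed space has no nonempty compact open subset.
-/

open Filter Set Topology

section Recurrence

variable {X : Type*} [TopologicalSpace X] {f : X → X} {x y : X}

/-- The point `x` is recurrent under `f`: its orbit returns to every neighbourhood of `x` at
arbitrarily late times. -/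
def IsRecurrentPt (f : X → X) (x : X) : Prop :=
  MapClusterPt x atTop fun n => f^[n] x

/-- The closure of the forward orbit of `x` under `f`; the orbit starts at time `0`. -/
def orbitClosure (f : X → X) (x : X) : Set X :=
  closure (range fun n => f^[n] x)

lemma isClosed_orbitClosure : IsClosed (orbitClosure f x) := isClosed_closure

lemma iterate_mem_orbitClosure (n : ℕ) : f^[n] x ∈ orbitClosure f x :=
  subset_closure (mem_range_self n)

lemma self_mem_orbitClosure : x ∈ orbitClosure f x := iterate_mem_orbitClosure 0

lemma orbitClosure_subset {s : Set X} (hs : IsClosed s) (hfs : MapsTo f s s) (hx : x ∈ s) :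
    orbitClosure f x ⊆ s :=
  closure_minimal (range_subset_iff.2 fun n => hfs.iterate n hx) hs

lemma mapsTo_orbitClosure (hf : Continuous f) :
    MapsTo f (orbitClosure f x) (orbitClosure f x) := by
  refine MapsTo.closure ?_ hf
  rintro _ ⟨n, rfl⟩
  exact ⟨n + 1, Function.iterate_succ_apply' f n x⟩

lemma mem_orbitClosure_of_mapClusterPt (h : MapClusterPt x atTop fun n => f^[n] y) :
    x ∈ orbitClosure f y :=
  isClosed_orbitClosure.mem_of_mapClusterPt h (.of_forall iterate_mem_orbitClosure)

lemma IsRecurrentPt.mem_of_iterate_mem (hx : IsRecurrentPt f x) {s : Set X} (hs : IsClosed s)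
    (hfs : MapsTo f s s) {n : ℕ} (hn : f^[n] x ∈ s) : x ∈ s := by
  refine hs.mem_of_mapClusterPt hx ?_
  filter_upwards [eventually_ge_atTop n] with m hm
  rw [← Nat.sub_add_cancel hm, Function.iterate_add_apply]
  exact hfs.iterate (m - n) hn

lemma IsRecurrentPt.of_tendsto {n : ℕ → ℕ} (hn : Tendsto n atTop atTop)
    (hx : Tendsto (fun k => f^[n k] x) atTop (𝓝 x)) : IsRecurrentPt f x :=
  MapClusterPt.of_comp hn hx.mapClusterPt

lemma IsRecurrentPt.restrict {s : Set X} (hx : IsRecurrentPt f x) (hfs : MapsTo f s s)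
    (hxs : x ∈ s) : IsRecurrentPt (hfs.restrict f s s) ⟨x, hxs⟩ := by
  refine IsInducing.subtypeVal.mapClusterPt_iff.1 ?_
  simpa only [IsRecurrentPt, mapClusterPt_def, map_map, Function.comp_def,
    hfs.coe_iterate_restrict] using hx

end Recurrence

section BoundedReturnTimes

variable {X : Type*} {f : X → X} {K : Set X}

lemma mapsTo_biUnion_iterate_image {N : ℕ} (hreturn : ∀ y ∈ K, ∃ n ≤ N, f^[n + 1] y ∈ K) :
    MapsTo f (⋃ n ∈ Iic N, f^[n] '' K) (⋃ n ∈ Iic N, f^[n] '' K) := by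
  intro z hz
  obtain ⟨n, hnN, y, hy, rfl⟩ := mem_iUnion₂.1 hz
  rw [← Function.iterate_succ_apply' f]
  rcases (mem_Iic.1 hnN).lt_or_eq with hlt | rfl
  · exact mem_biUnion (mem_Iic.2 hlt) (mem_image_of_mem _ hy)
  · obtain ⟨i, hi, hiy⟩ := hreturn y hy
    refine mem_biUnion (mem_Iic.2 (Nat.sub_le n i)) ⟨f^[i + 1] y, hiy, ?_⟩
    rw [← Function.iterate_add_apply, ← add_assoc, Nat.sub_add_cancel hi]

variable [TopologicalSpace X]

lemma exists_forall_exists_le_iterate_mem (hK : IsCompact K)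
    (hreturn : ∀ y ∈ K, ∃ n, ∀ᶠ z in 𝓝[K] y, f^[n + 1] z ∈ K) :
    ∃ N, ∀ y ∈ K, ∃ n ≤ N, f^[n + 1] y ∈ K := by
  refine hK.induction_on (p := fun s => ∃ N, ∀ y ∈ s, ∃ n ≤ N, f^[n + 1] y ∈ K) ?_ ?_ ?_ ?_
  · exact ⟨0, fun y hy => hy.elim⟩
  · rintro s t hst ⟨N, hN⟩
    exact ⟨N, fun y hy => hN y (hst hy)⟩
  · rintro s t ⟨M, hM⟩ ⟨N, hN⟩
    refine ⟨max M N, fun y hy => hy.elim (fun hys => ?_) fun hyt => ?_⟩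
    · obtain ⟨n, hn, hny⟩ := hM y hys
      exact ⟨n, le_max_of_le_left hn, hny⟩
    · obtain ⟨n, hn, hny⟩ := hN y hyt
      exact ⟨n, le_max_of_le_right hn, hny⟩
  · intro y hy
    obtain ⟨n, hn⟩ := hreturn y hy
    exact ⟨_, hn, n, fun z hz => ⟨n, le_rfl, hz⟩⟩

lemma exists_isCompact_superset_mapsTo (hK : IsCompact K) (hf : Continuous f)
    (hreturn : ∀ y ∈ K, ∃ n, ∀ᶠ z in 𝓝[K] y, f^[n + 1] z ∈ K) :
    ∃ L, IsCompact L ∧ K ⊆ L ∧ MapsTo f L L := by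
  obtain ⟨N, hN⟩ := exists_forall_exists_le_iterate_mem hK hreturn
  refine ⟨⋃ n ∈ Iic N, f^[n] '' K, ?_, ?_, mapsTo_biUnion_iterate_image hN⟩
  · exact (finite_Iic N).isCompact_biUnion fun n _ => hK.image (hf.iterate n)
  · exact fun y hy => mem_biUnion (mem_Iic.2 N.zero_le) ⟨y, hy, rfl⟩

end BoundedReturnTimes

section EquicontinuousIterates

variable {X : Type*} [UniformSpace X] {f : X → X} {x y : X}

lemma IsRecurrentPt.mapClusterPt_of_mem_orbitClosure (hx : IsRecurrentPt f x)
    (hy : y ∈ orbitClosure f x) (hequi : EquicontinuousAt (fun n => f^[n]) y) :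
    MapClusterPt x atTop fun n => f^[n] y := by
  refine mapClusterPt_iff_frequently.2 fun s hs => frequently_atTop.2 fun N => ?_
  obtain ⟨V, hV, hVs⟩ := UniformSpace.mem_nhds_iff.1 hs
  obtain ⟨W, hW, hWsymm, hWV⟩ := comp_symm_mem_uniformity_sets hV
  obtain ⟨_, hclose, b, rfl⟩ := mem_closure_iff_nhds.1 hy _ (hequi W hW)
  obtain ⟨m, hm, hmx⟩ := frequently_atTop.1 (hx.frequently (UniformSpace.ball_mem_nhds x hW))
    (N + b)
  have hclose_m : (f^[m - b] y, f^[m] x) ∈ W := by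
    simpa only [← Function.iterate_add_apply, Nat.sub_add_cancel (le_of_add_le_right hm)]
      using hclose (m - b)
  exact ⟨m - b, Nat.le_sub_of_add_le hm, hVs (hWV ⟨f^[m] x, hmx, hWsymm.symm _ _ hclose_m⟩)⟩

theorem IsRecurrentPt.isCompact_orbitClosure [WeaklyLocallyCompactSpace X]
    (hx : IsRecurrentPt f x) (hequi : Equicontinuous fun n => f^[n]) :
    IsCompact (orbitClosure f x) := by
  have hf : Continuous f := hequi.continuous 1
  obtain ⟨K, hK, hKx⟩ := exists_compact_mem_nhds x
  have hreturn : ∀ y ∈ K ∩ orbitClosure f x,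
      ∃ n, ∀ᶠ z in 𝓝[K ∩ orbitClosure f x] y, f^[n + 1] z ∈ K ∩ orbitClosure f x := by
    rintro y ⟨-, hy⟩
    have hxy := hx.mapClusterPt_of_mem_orbitClosure hy (hequi y)
    obtain ⟨m, hm, hmy⟩ :=
      frequently_atTop.1 (hxy.frequently (eventually_mem_nhds_iff.2 hKx)) 1
    obtain ⟨n, rfl⟩ := Nat.exists_eq_add_of_le' hm
    refine ⟨n, ?_⟩
    filter_upwards [self_mem_nhdsWithin,
      mem_nhdsWithin_of_mem_nhds ((hf.iterate (n + 1)).continuousAt hmy)] with z hz hzK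
    exact ⟨hzK, (mapsTo_orbitClosure hf).iterate (n + 1) hz.2⟩
  obtain ⟨L, hL, hKL, hfL⟩ :=
    exists_isCompact_superset_mapsTo (hK.inter_right isClosed_orbitClosure) hf hreturn
  have hxL : x ∈ L := hKL ⟨mem_of_mem_nhds hKx, self_mem_orbitClosure⟩
  exact hL.closure_of_subset (range_subset_iff.2 fun n => hfL.iterate n hxL)

theorem isOpen_orbitClosure (hrec : ∀ z, IsRecurrentPt f z)
    (hequi : Equicontinuous fun n => f^[n]) (hint : (interior (orbitClosure f x)).Nonempty) :
    IsOpen (orbitClosure f x) := by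
  have hf : Continuous f := hequi.continuous 1
  refine isOpen_iff_mem_nhds.2 fun y hy => ?_
  have hminimal : orbitClosure f x ⊆ orbitClosure f y :=
    orbitClosure_subset isClosed_orbitClosure (mapsTo_orbitClosure hf)
      (mem_orbitClosure_of_mapClusterPt
        ((hrec x).mapClusterPt_of_mem_orbitClosure hy (hequi y)))
  obtain ⟨q, hq⟩ := hint
  obtain ⟨_, hn, n, rfl⟩ :=
    mem_closure_iff.1 (hminimal (interior_subset hq)) _ isOpen_interior hq
  filter_upwards [(hf.iterate n).continuousAt (isOpen_interior.mem_nhds hn)] with z hz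
  exact (hrec z).mem_of_iterate_mem isClosed_orbitClosure (mapsTo_orbitClosure hf)
    (interior_subset hz)

end EquicontinuousIterates

lemma not_isCompact_of_isOpen {E : Type*} [TopologicalSpace E] [T2Space E] [PreconnectedSpace E]
    [NoncompactSpace E] {s : Set E} (hs : IsOpen s) (hne : s.Nonempty) : ¬ IsCompact s :=
  fun hcomp => noncompact_univ E (IsClopen.eq_univ ⟨hcomp.isClosed, hs⟩ hne ▸ hcomp)

theorem isNowhereDense_orbit_of_equicontinuous {E : Type*} [UniformSpace E] [T2Space E]
    [LocallyCompactSpace E] [PreconnectedSpace E] [NoncompactSpace E] {U : Set E} (hU : IsOpen U)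
    {f : U → U} (hequi : Equicontinuous fun n => f^[n]) (hrec : ∀ z, IsRecurrentPt f z) (p : U) :
    IsNowhereDense (range fun n => (f^[n] p : E)) := by
  have : LocallyCompactSpace U := hU.locallyCompactSpace
  set C : Set E := (↑) '' orbitClosure f p
  have hC : IsCompact C :=
    ((hrec p).isCompact_orbitClosure hequi).image continuous_subtype_val
  have hsub : closure (range fun n => (f^[n] p : E)) ⊆ C :=
    closure_minimal (range_subset_iff.2 fun n => mem_image_of_mem _ (iterate_mem_orbitClosure n))
      hC.isClosed
  refine subset_empty_iff.1 fun q hq => ?_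
  have hqC : q ∈ interior C := interior_mono hsub hq
  obtain ⟨q, -, rfl⟩ := interior_subset hqC
  have hint : (interior (orbitClosure f p)).Nonempty := by
    refine ⟨q, ?_⟩
    have := preimage_interior_subset_interior_preimage continuous_subtype_val hqC
    rwa [preimage_image_eq _ Subtype.val_injective] at this
  have hopen : IsOpen C :=
    hU.isOpenMap_subtype_val _ (isOpen_orbitClosure hrec hequi hint)
  exact not_isCompact_of_isOpen hopen ⟨q, interior_subset hqC⟩ hC

lemma equicontinuousOn_of_differentiableOn_of_isBounded {ι E E' : Type*} [NormedAddCommGroup E]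
    [NormedSpace ℂ E] [NormedAddCommGroup E'] [NormedSpace ℂ E'] {U : Set E} {V : Set E'}
    (hU : IsOpen U) (hV : Bornology.IsBounded V) {H : ι → E → E'}
    (hH : ∀ i, DifferentiableOn ℂ (H i) U) (hmaps : ∀ i, MapsTo (H i) U V) :
    EquicontinuousOn H U := by
  intro z hz
  obtain ⟨r, hr, hrU⟩ := Metric.isOpen_iff.1 hU z hz
  obtain ⟨R, hR⟩ := Metric.isBounded_iff.1 hV
  have hlim : Tendsto (fun w => R / r * dist w z) (𝓝 z) (𝓝 0) := by
    have : Continuous fun w => R / r * dist w z := by fun_prop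
    simpa only [dist_self, mul_zero] using this.tendsto z
  have hschwarz : ∀ᶠ w in 𝓝 z, ∀ i, dist (H i z) (H i w) ≤ R / r * dist w z := by
    filter_upwards [Metric.ball_mem_nhds z hr] with w hw i
    rw [dist_comm]
    exact Complex.dist_le_div_mul_dist_of_mapsTo_ball ((hH i).mono hrU)
      (fun v hv => hR (hmaps i (hrU hv)) (hmaps i hz)) hw
  exact (Metric.equicontinuousAt_of_continuity_modulus _ hlim H hschwarz).equicontinuousWithinAt U

lemma equicontinuous_iterate_restrict {E : Type*} [NormedAddCommGroup E] [NormedSpace ℂ E]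
    {U : Set E} (hU : IsOpen U) (hUbdd : Bornology.IsBounded U) {F : E → E}
    (hF : DifferentiableOn ℂ F U) (hFU : MapsTo F U U) :
    Equicontinuous fun n => (hFU.restrict F U U)^[n] := by
  have hon : EquicontinuousOn (fun n => F^[n]) U :=
    equicontinuousOn_of_differentiableOn_of_isBounded hU hUbdd (hF.iterate hFU) hFU.iterate
  simp only [hFU.iterate_restrict]
  exact (isUniformEmbedding_subtype_val.isUniformInducing.equicontinuous_iff).2
    (equicontinuous_restrict_iff _ |>.2 hon)

theorem automorphism_no_dense_orbit_general {E : Type*} [NormedAddCommGroup E] [NormedSpace ℂ E]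
    [FiniteDimensional ℂ E] [Nontrivial E] {U : Set E} (hU : IsOpen U)
    (hUbdd : Bornology.IsBounded U) {F : E → E} (hF : DifferentiableOn ℂ F U)
    (hFU : MapsTo F U U) (hrec : ∀ z ∈ U, IsRecurrentPt F z) {p : E} (hp : p ∈ U) :
    IsNowhereDense (range fun k => F^[k] p) := by
  have : ProperSpace E := FiniteDimensional.proper ℂ E
  have : NoncompactSpace E := NormedSpace.noncompactSpace ℂ E
  simpa only [hFU.coe_iterate_restrict] using
    isNowhereDense_orbit_of_equicontinuous hU (equicontinuous_iterate_restrict hU hUbdd hF hFU)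
      (fun z => (hrec z z.2).restrict hFU z.2) ⟨p, hp⟩

/-- **The group-theoretic step in the proof of the Main Theorem.** Let `U ⊆ ℂ^m` (`m ≥ 1`)
be a bounded domain and `F` a biholomorphic automorphism of `U` (with holomorphic inverse
`G`) such that for some strictly increasing sequence `n_k` of positive integers the iterates
`F^{n_k}` converge locally uniformly on `U` to the identity.  Then no orbit of `F` is dense
in `U`; indeed the closure of every orbit is nowhere dense in `U`. -/
theorem automorphism_no_dense_orbit {m : ℕ} (hm : 0 < m)
    (U : Set (EuclideanSpace ℂ (Fin m)))
    (hUopen : IsOpen U) (hUconn : IsConnected U) (hUbdd : Bornology.IsBounded U)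
    (F G : EuclideanSpace ℂ (Fin m) → EuclideanSpace ℂ (Fin m))
    (hF : DifferentiableOn ℂ F U) (hFmaps : Set.MapsTo F U U)
    (hG : DifferentiableOn ℂ G U) (hGmaps : Set.MapsTo G U U)
    (hGF : ∀ z ∈ U, G (F z) = z) (hFG : ∀ z ∈ U, F (G z) = z)
    (n : ℕ → ℕ) (hmono : StrictMono n) (hpos : ∀ k, 0 < n k)
    (hconv : TendstoLocallyUniformlyOn (fun k => F^[n k]) id Filter.atTop U) :
    ∀ p ∈ U,
      ¬ (U ⊆ closure (Set.range fun k => F^[k] p)) ∧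
      interior (closure (Set.range fun k => F^[k] p) ∩ U) = ∅ := by
  intro p hp
  have : Nonempty (Fin m) := ⟨⟨0, hm⟩⟩
  have hnowhere : interior (closure (range fun k => F^[k] p)) = ∅ :=
    automorphism_no_dense_orbit_general hUopen hUbdd hF hFmaps
      (fun z hz => .of_tendsto hmono.tendsto_atTop (hconv.tendsto_at hz)) hp
  exact ⟨fun hdense => (hnowhere ▸ interior_maximal hdense hUopen hp : p ∈ (∅ : Set _)),
    subset_empty_iff.1 (hnowhere ▸ interior_mono inter_subset_left)⟩
end

section
/- Let Ω ⊂ ℂ^m be a bounded domain satisfying Ω = int(cl(Ω)), and let F : Ω → ℂ^m be a holomorphic map with discrete fibers (for every q ∈ ℂ^m, the preimage F^{−1}(q) is a discrete subset of Ω). Then F has no dense orbit: there do not exist a nonempty open subset V ⊂ Ω and a sequence {p_n}_{n≥0} ⊂ Ω with F(p_n) = p_{n+1} for all n such that {p_n} ∩ V is dense in V. -/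
/-!
For an orbit `p` in `Ω`, let `W = int (cl {p n})`, which is contained in `int (cl Ω) = Ω`. By
continuity `F` maps `W` into the closure of the orbit, and since a holomorphic map with discrete
fibers between spaces of the same dimension is open, `F` maps `W` into `W`. If `W` is nonempty, then
the orbit enters `W`, stays there and is dense in it.

By the Schwarz lemma the iterates of a holomorphic self-map of a bounded open set are
equicontinuous. Hence every point of `W` inherits the recurrence of the dense orbit: the points of
a compact neighborhood `K ⊆ W` of a point of the orbit all return to its interior, by compactness in
bounded time. The orbit is therefore contained in finitely many of the compact sets `F^[i] '' K`,
and `W` is compact, which is absurd for a nonempty open set in a positive-dimensional space.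

Openness is a dimension count. The Jacobian determinant vanishes identically on no nonempty open
set: where the nullity of the derivative is minimal its kernel contains a nonvanishing `C¹` vector
field, and `F` is constant along the integral curves. So the zero set of the determinant has real
codimension at least two, the set of critical values has Hausdorff dimension at most the real
dimension minus two, and it does not separate a ball. Near `F x` the image of a small closed ball
around `x` is closed, and it is open away from the critical values, hence it is a neighborhood.

The regularity needed comes from the Schwarz lemma as well: difference quotients converge locally
uniformly to directional derivatives, which are therefore holomorphic.
-/

open Metric Set Filter Topology Module

/-! ### Holomorphic maps of several variables -/

theorem exists_forall_mapsTo_ball_closedBall {X Y : Type*} [PseudoMetricSpace X]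
    [PseudoMetricSpace Y] {f : X → Y} {U : Set X} (hU : IsOpen U) (hf : ContinuousOn f U) {x₀ : X}
    (hx₀ : x₀ ∈ U) :
    ∃ R > 0, ∃ M, ∀ x ∈ ball x₀ R, ball x R ⊆ U ∧ MapsTo f (ball x R) (closedBall (f x) M) := by
  have hnear : ∀ᶠ y in 𝓝 x₀, y ∈ U ∧ dist (f y) (f x₀) < 1 :=
    (hU.eventually_mem hx₀).and
      ((hf.continuousAt (hU.mem_nhds hx₀)).eventually (ball_mem_nhds _ one_pos))
  obtain ⟨r, hr, hball⟩ := Metric.eventually_nhds_iff_ball.1 hnear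
  refine ⟨r / 2, half_pos hr, 2, fun x hx ↦ ?_⟩
  have hsub : ball x (r / 2) ⊆ ball x₀ r := ball_subset_ball' (by linarith [mem_ball.1 hx])
  refine ⟨fun y hy ↦ (hball y (hsub hy)).1, fun y hy ↦ mem_closedBall.2 ?_⟩
  linarith [dist_triangle_right (f y) (f x) (f x₀), (hball y (hsub hy)).2,
    (hball x (hsub (mem_ball_self (half_pos hr)))).2]

section Regularity

variable {E G : Type*} [NormedAddCommGroup E] [NormedSpace ℂ E] [NormedAddCommGroup G]
  [NormedSpace ℂ G]

theorem norm_sub_sub_fderiv_le_of_mapsTo_ball {f : E → G} {c z : E} {R M : ℝ}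
    (hf : DifferentiableOn ℂ f (ball c R)) (hM : MapsTo f (ball c R) (closedBall (f c) M))
    (hz : z ∈ ball c R) :
    ‖f z - f c - fderiv ℂ f c (z - c)‖ ≤ 2 * M * (‖z - c‖ / R) ^ 2 := by
  have hR : 0 < R := nonempty_ball.1 ⟨z, hz⟩
  let φ : E → G := fun y ↦ f y - fderiv ℂ f c (y - c)
  have hφc : φ c = f c := by simp [φ]
  have hφM : MapsTo φ (ball c R) (closedBall (φ c) (2 * M)) := by
    intro y hy
    have hf' : ‖fderiv ℂ f c (y - c)‖ ≤ M := calc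
      ‖fderiv ℂ f c (y - c)‖ ≤ M / R * ‖y - c‖ :=
        (fderiv ℂ f c).le_of_opNorm_le (Complex.norm_fderiv_le_div_of_mapsTo_ball hf hM hR) _
      _ ≤ M / R * R := by
        have : 0 ≤ M := nonempty_closedBall.1 ⟨f y, hM hy⟩
        gcongr
        exact (mem_ball_iff_norm.1 hy).le
      _ = M := div_mul_cancel₀ M hR.ne'
    rw [mem_closedBall_iff_norm, hφc, sub_right_comm]
    linarith [norm_sub_le (f y - f c) (fderiv ℂ f c (y - c)), mem_closedBall_iff_norm.1 (hM hy)]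
  have hφo : (fun y ↦ φ y - φ c) =o[𝓝 c] fun y ↦ ‖y - c‖ ^ 1 := by
    simpa only [φ, hφc, sub_right_comm, pow_one, Asymptotics.isLittleO_norm_right] using
      (hf.differentiableAt (ball_mem_nhds c hR)).hasFDerivAt.isLittleO
  simpa [φ, dist_eq_norm, sub_right_comm] using
    Complex.dist_le_mul_div_pow_of_mapsTo_ball_of_isLittleO (n := 1)
      (hf.sub (by fun_prop)) hφM hφo hz

theorem tendstoUniformlyOn_fderiv_zero {ι : Type*} {l : Filter ι} {h : ι → E → G} {s : Set E}
    {R : ℝ} (hR : 0 < R) (hh : ∀ᶠ n in l, DifferentiableOn ℂ (h n) (thickening R s))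
    (hlim : TendstoUniformlyOn h 0 l (thickening R s)) :
    TendstoUniformlyOn (fun n ↦ fderiv ℂ (h n)) 0 l s := by
  rw [Metric.tendstoUniformlyOn_iff] at hlim ⊢
  intro ε hε
  filter_upwards [hh, hlim (R * ε / 4) (by positivity)] with n hdiff hsmall x hx
  simp only [Pi.zero_apply, dist_zero_left] at hsmall ⊢
  have hsub : ball x R ⊆ thickening R s := ball_subset_thickening hx R
  refine (Complex.norm_fderiv_le_div_of_mapsTo_ball (hdiff.mono hsub)
    (R₂ := R * ε / 2) (fun y hy ↦ mem_closedBall_iff_norm.2 ?_) hR).trans_lt ?_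
  · linarith [norm_sub_le (h n y) (h n x), hsmall y (hsub hy), hsmall x (hsub (mem_ball_self hR))]
  · rw [mul_div_assoc, mul_div_cancel_left₀ _ hR.ne']
    exact half_lt_self hε

theorem uniformCauchySeqOn_fderiv {ι : Type*} {l : Filter ι} {f : ι → E → G} {s : Set E}
    {R : ℝ} (hR : 0 < R) (hf : ∀ᶠ n in l, DifferentiableOn ℂ (f n) (thickening R s))
    (hcau : UniformCauchySeqOn f l (thickening R s)) :
    UniformCauchySeqOn (fun n ↦ fderiv ℂ (f n)) l s := by
  rw [SeminormedAddGroup.uniformCauchySeqOn_iff_tendstoUniformlyOn_zero] at hcau ⊢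
  have hf₂ : ∀ᶠ n in l ×ˢ l, DifferentiableOn ℂ (f n.1) (thickening R s) ∧
    DifferentiableOn ℂ (f n.2) (thickening R s) := hf.prod_mk hf
  refine (tendstoUniformlyOn_fderiv_zero hR (hf₂.mono fun n hn ↦ hn.1.neg.add hn.2) hcau).congr ?_
  filter_upwards [hf₂] with n hn x hx
  have hnear : thickening R s ∈ 𝓝 x := isOpen_thickening.mem_nhds (self_subset_thickening hR s hx)
  exact ((hn.1.differentiableAt hnear).hasFDerivAt.neg.add
    (hn.2.differentiableAt hnear).hasFDerivAt).fderiv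

theorem differentiableOn_of_tendstoUniformlyOn [CompleteSpace G] {ι : Type*}
    {l : Filter ι} [l.NeBot] {f : ι → E → G} {g : E → G} {U : Set E} (hU : IsOpen U)
    (hf : ∀ᶠ n in l, DifferentiableOn ℂ (f n) U) (hlim : TendstoUniformlyOn f g l U) :
    DifferentiableOn ℂ g U := by
  intro x hx
  obtain ⟨R, hR, hRU⟩ : ∃ R > 0, thickening R (ball x R) ⊆ U := by
    obtain ⟨r, hr, hrU⟩ := Metric.isOpen_iff.1 hU x hx
    exact ⟨r / 2, half_pos hr, by rwa [thickening_ball (half_pos hr) (half_pos hr), add_halves]⟩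
  have hcau : UniformCauchySeqOn (fun n ↦ fderiv ℂ (f n)) l (ball x R) :=
    uniformCauchySeqOn_fderiv hR (hf.mono fun n hn ↦ hn.mono hRU)
      (hlim.uniformCauchySeqOn.mono hRU)
  have hexists : ∀ y ∈ ball x R, ∃ g', Tendsto (fun n ↦ fderiv ℂ (f n) y) l (𝓝 g') :=
    fun y hy ↦ CompleteSpace.complete (hcau.cauchy_map hy)
  choose! g' hg' using hexists
  have hxU : ball x R ⊆ U := (self_subset_thickening hR _).trans hRU
  have hlim' : TendstoUniformlyOnFilter (fun n ↦ fderiv ℂ (f n)) g' l (𝓝 x) :=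
    (hcau.tendstoUniformlyOn_of_tendsto hg').tendstoUniformlyOnFilter.mono_right
      (le_principal_iff.2 (ball_mem_nhds x hR))
  have hderiv : ∀ᶠ n : ι × E in l ×ˢ 𝓝 x, HasFDerivAt (f n.1) (fderiv ℂ (f n.1) n.2) n.2 := by
    filter_upwards [hf.prod_mk (ball_mem_nhds x hR)] with n hn
    exact (hn.1.differentiableAt (hU.mem_nhds (hxU hn.2))).hasFDerivAt
  have hpointwise : ∀ᶠ y in 𝓝 x, Tendsto (fun n ↦ f n y) l (𝓝 (g y)) := by
    filter_upwards [ball_mem_nhds x hR] with y hy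
    exact hlim.tendsto_at (hxU hy)
  exact (hasFDerivAt_of_tendstoUniformlyOnFilter hlim' hderiv
    hpointwise).differentiableAt.differentiableWithinAt

theorem eventually_smul_mem_ball {R : ℝ} (hR : 0 < R) (v : E) :
    ∀ᶠ t : ℂ in 𝓝[≠] 0, t • v ∈ ball 0 R :=
  nhdsWithin_le_nhds <| (Continuous.tendsto' (f := fun t : ℂ ↦ t • v) (by fun_prop) 0 0
    (zero_smul ℂ v)).eventually (ball_mem_nhds 0 hR)

theorem tendstoUniformlyOn_slope_fderiv {f : E → G} {s : Set E} {R M : ℝ} (hR : 0 < R)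
    (hf : ∀ x ∈ s, DifferentiableOn ℂ f (ball x R))
    (hM : ∀ x ∈ s, MapsTo f (ball x R) (closedBall (f x) M)) (v : E) :
    TendstoUniformlyOn (fun (t : ℂ) x ↦ t⁻¹ • (f (x + t • v) - f x)) (fun x ↦ fderiv ℂ f x v)
      (𝓝[≠] 0) s := by
  have hbound : ∀ᶠ t : ℂ in 𝓝[≠] 0, ∀ x ∈ s,
      dist (fderiv ℂ f x v) (t⁻¹ • (f (x + t • v) - f x)) ≤ ‖t‖ * (2 * M * (‖v‖ / R) ^ 2) := by
    filter_upwards [eventually_smul_mem_ball hR v, self_mem_nhdsWithin] with t htR ht x hx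
    have hremainder := norm_sub_sub_fderiv_le_of_mapsTo_ball (z := x + t • v) (hf x hx) (hM x hx)
      (by simpa using htR)
    rw [add_sub_cancel_left, map_smul] at hremainder
    calc dist (fderiv ℂ f x v) (t⁻¹ • (f (x + t • v) - f x))
        = ‖t⁻¹ • (f (x + t • v) - f x - t • fderiv ℂ f x v)‖ := by
          rw [dist_comm, dist_eq_norm, smul_sub _ _ (t • _), inv_smul_smul₀ ht]
      _ ≤ ‖t‖⁻¹ * (2 * M * (‖t • v‖ / R) ^ 2) := by
          rw [norm_smul, norm_inv]
          gcongr
      _ = ‖t‖ * (2 * M * (‖v‖ / R) ^ 2) := by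
          have : ‖t‖ ≠ 0 := norm_ne_zero_iff.2 ht
          rw [norm_smul]
          field_simp
  rw [Metric.tendstoUniformlyOn_iff]
  intro ε hε
  have hzero : Tendsto (fun t : ℂ ↦ ‖t‖ * (2 * M * (‖v‖ / R) ^ 2)) (𝓝[≠] 0) (𝓝 0) :=
    (Continuous.tendsto' (by fun_prop) _ _ (by simp)).mono_left nhdsWithin_le_nhds
  filter_upwards [hbound, hzero.eventually_lt_const hε] with t ht htε x hx
  exact (ht x hx).trans_lt htε

theorem differentiableOn_fderiv_apply [CompleteSpace G] {f : E → G} {U : Set E} (hU : IsOpen U)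
    (hf : DifferentiableOn ℂ f U) (v : E) : DifferentiableOn ℂ (fun x ↦ fderiv ℂ f x v) U := by
  intro x₀ hx₀
  obtain ⟨R, hR, M, hRM⟩ := exists_forall_mapsTo_ball_closedBall hU hf.continuousOn hx₀
  have hlim := tendstoUniformlyOn_slope_fderiv hR (fun x hx ↦ hf.mono (hRM x hx).1)
    (fun x hx ↦ (hRM x hx).2) v
  have hball : ∀ᶠ t : ℂ in 𝓝[≠] 0, MapsTo (fun x ↦ x + t • v) (ball x₀ (R / 2)) (ball x₀ R) := by
    filter_upwards [eventually_smul_mem_ball (half_pos hR) v] with t ht x hx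
    rw [mem_ball_iff_norm] at hx ⊢
    rw [mem_ball_zero_iff] at ht
    rw [add_sub_right_comm]
    linarith [norm_add_le (x - x₀) (t • v)]
  refine ((differentiableOn_of_tendstoUniformlyOn isOpen_ball ?_
    (hlim.mono (ball_subset_ball (half_le_self hR.le)))).differentiableAt
    (ball_mem_nhds x₀ (half_pos hR))).differentiableWithinAt
  filter_upwards [hball] with t ht
  have hfR : DifferentiableOn ℂ f (ball x₀ R) := hf.mono (hRM x₀ (mem_ball_self hR)).1
  exact ((hfR.comp (by fun_prop) ht).sub
    (hfR.mono (ball_subset_ball (half_le_self hR.le)))).const_smul t⁻¹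

variable [FiniteDimensional ℂ E] [CompleteSpace G] {f : E → G} {U : Set E}

theorem contDiffOn_one_of_differentiableOn (hU : IsOpen U) (hf : DifferentiableOn ℂ f U) :
    ContDiffOn ℂ 1 f U := by
  rw [← zero_add 1, contDiffOn_succ_iff_fderiv_of_isOpen hU]
  refine ⟨hf, by simp, contDiffOn_clm_apply.2 fun v ↦ contDiffOn_zero.2 ?_⟩
  exact (differentiableOn_fderiv_apply hU hf v).continuousOn

theorem contDiffOn_fderiv_of_differentiableOn (hU : IsOpen U) (hf : DifferentiableOn ℂ f U) :
    ContDiffOn ℂ 1 (fderiv ℂ f) U :=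
  contDiffOn_clm_apply.2 fun v ↦
    contDiffOn_one_of_differentiableOn hU (differentiableOn_fderiv_apply hU hf v)

theorem hasStrictFDerivAt_of_differentiableOn (hU : IsOpen U) (hf : DifferentiableOn ℂ f U)
    {x : E} (hx : x ∈ U) : HasStrictFDerivAt f (fderiv ℂ f x) x :=
  ((contDiffOn_one_of_differentiableOn hU hf).contDiffAt (hU.mem_nhds hx)).hasStrictFDerivAt
    one_ne_zero

end Regularity

/-! ### Maps with singular derivative -/

section KernelField

theorem exists_injective_add_finrank_range_le {K V : Type*} [Field K] [AddCommGroup V] [Module K V]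
    [FiniteDimensional K V] (L : V →ₗ[K] V) :
    ∃ N : V →ₗ[K] V, Function.Injective (L + N) ∧
      finrank K (LinearMap.range N) ≤ finrank K (LinearMap.ker L) := by
  obtain ⟨C, hC⟩ := Submodule.exists_isCompl (LinearMap.ker L)
  obtain ⟨D, hD⟩ := Submodule.exists_isCompl (LinearMap.range L)
  have hfinrank : finrank K (LinearMap.ker L) = finrank K D := by
    have := LinearMap.finrank_range_add_finrank_ker L
    have := Submodule.finrank_add_eq_of_isCompl hD
    omega
  let e : LinearMap.ker L ≃ₗ[K] D := LinearEquiv.ofFinrankEq _ _ hfinrank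
  let P : V →ₗ[K] LinearMap.ker L := Submodule.projectionOnto _ _ hC
  refine ⟨D.subtype ∘ₗ e.toLinearMap ∘ₗ P, ?_, ?_⟩
  · rw [← LinearMap.ker_eq_bot, LinearMap.ker_eq_bot']
    intro x hx
    have hsum : L x + (e (P x) : V) = 0 := hx
    obtain ⟨hLx, hePx⟩ : L x = 0 ∧ (e (P x) : V) = 0 := by
      have hLx : L x ∈ D := by
        rw [eq_neg_of_add_eq_zero_left hsum]
        exact D.neg_mem (e (P x)).2
      have hLx0 := Submodule.disjoint_def.1 hD.disjoint _ (LinearMap.mem_range_self L x) hLx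
      exact ⟨hLx0, by rwa [hLx0, zero_add] at hsum⟩
    have hPx : P x = ⟨x, hLx⟩ := Submodule.projectionOnto_apply_left hC ⟨x, hLx⟩
    have hPx0 : P x = 0 := by simpa using hePx
    exact congrArg Subtype.val (hPx.symm.trans hPx0)
  · rw [hfinrank, LinearMap.range_comp]
    exact Submodule.finrank_mono (Submodule.map_subtype_le D _)

theorem map_ker_eq_range_of_injective_add {K V W : Type*} [DivisionRing K] [AddCommGroup V]
    [Module K V] [AddCommGroup W] [Module K W] [FiniteDimensional K V] {L N : V →ₗ[K] W}
    (hinj : Function.Injective (L + N))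
    (hrank : finrank K (LinearMap.range N) ≤ finrank K (LinearMap.ker L)) :
    (LinearMap.ker L).map N = LinearMap.range N := by
  refine Submodule.eq_of_le_of_finrank_le LinearMap.map_le_range (hrank.trans_eq ?_)
  have hmap : (LinearMap.ker L).map (L + N) = (LinearMap.ker L).map N :=
    SetLike.coe_injective <| image_congr fun x (hx : L x = 0) ↦ by simp [hx]
  rw [← hmap]
  exact (Submodule.equivMapOfInjective (L + N) hinj (LinearMap.ker L)).finrank_eq

variable {𝕜 X V : Type*} [NontriviallyNormedField 𝕜] [CompleteSpace 𝕜] [NormedAddCommGroup X]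
  [NormedSpace 𝕜 X] [NormedAddCommGroup V] [NormedSpace 𝕜 V] [FiniteDimensional 𝕜 V]

-- With `N` such that `A x₀ + N` is invertible, `v x = (A x + N)⁻¹ (N k)` works: where the nullity
-- does not drop, `N` maps `ker (A x)` onto `range N`, so the preimage of `N k` lies in `ker (A x)`.
theorem exists_contDiffAt_mem_ker {A : X → V →L[𝕜] V} {n : WithTop ℕ∞} {x₀ : X}
    (hA : ContDiffAt 𝕜 n A x₀)
    (hmin : ∀ᶠ x in 𝓝 x₀, finrank 𝕜 (LinearMap.ker (A x₀ : V →ₗ[𝕜] V)) ≤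
      finrank 𝕜 (LinearMap.ker (A x : V →ₗ[𝕜] V))) {k : V} (hk : A x₀ k = 0) :
    ∃ v : X → V, ContDiffAt 𝕜 n v x₀ ∧ v x₀ = k ∧ ∀ᶠ x in 𝓝 x₀, A x (v x) = 0 := by
  have : CompleteSpace V := FiniteDimensional.complete 𝕜 V
  obtain ⟨N, hinj, hrank⟩ := exists_injective_add_finrank_range_le (A x₀ : V →ₗ[𝕜] V)
  let B : X → V →L[𝕜] V := fun x ↦ A x + N.toContinuousLinearMap
  have hB : ContDiffAt 𝕜 n B x₀ := hA.add contDiffAt_const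
  have hB₀ : (B x₀).IsInvertible :=
    ⟨(LinearEquiv.ofInjectiveEndo _ hinj).toContinuousLinearEquiv, rfl⟩
  have hBinv : ∀ᶠ x in 𝓝 x₀, (B x).IsInvertible := by
    obtain ⟨e₀, he₀⟩ := hB₀
    exact hB.continuousAt.eventually (he₀ ▸ e₀.nhds)
  refine ⟨fun x ↦ (B x).inverse (N k), (hB₀.contDiffAt_map_inverse.comp x₀ hB).clm_apply
    contDiffAt_const, ?_, ?_⟩
  · rw [hB₀.inverse_apply_eq]
    simp [B, hk]
  · filter_upwards [hBinv, hmin] with x hx hle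
    have hmap := map_ker_eq_range_of_injective_add (L := (A x : V →ₗ[𝕜] V)) (N := N) hx.injective
      (hrank.trans hle)
    obtain ⟨y, hy, hNy⟩ : N k ∈ (LinearMap.ker (A x : V →ₗ[𝕜] V)).map N :=
      hmap ▸ LinearMap.mem_range_self N k
    have hAy : A x y = 0 := hy
    have : (B x).inverse (N k) = y := by
      rw [hx.inverse_apply_eq]
      simp [B, hAy, hNy]
    rwa [this]

theorem frequently_eq_of_fderiv_apply_eq_zero {E G : Type*} [NormedAddCommGroup E]
    [NormedSpace ℝ E] [CompleteSpace E] [NormedAddCommGroup G] [NormedSpace ℝ G] {f : E → G}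
    {v : E → E} {x₀ : E} (hf : ∀ᶠ x in 𝓝 x₀, DifferentiableAt ℝ f x) (hv : ContDiffAt ℝ 1 v x₀)
    (hv₀ : v x₀ ≠ 0) (hfv : ∀ᶠ x in 𝓝 x₀, fderiv ℝ f x (v x) = 0) :
    ∃ᶠ y in 𝓝[≠] x₀, f y = f x₀ := by
  obtain ⟨α, hα₀, ε, hε, hα⟩ :=
    hv.exists_forall_mem_closedBall_exists_eq_forall_mem_Ioo_hasDerivAt₀ 0
  have hα' : HasDerivAt α (v x₀) 0 := hα₀ ▸ hα 0 (by constructor <;> linarith)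
  have hαt : Tendsto α (𝓝 0) (𝓝 x₀) := hα₀ ▸ hα'.continuousAt.tendsto
  have hder : ∀ᶠ t in 𝓝 0, HasDerivAt (f ∘ α) 0 t := by
    filter_upwards [hαt.eventually hf, hαt.eventually hfv,
      Ioo_mem_nhds (by linarith : 0 - ε < 0) (by linarith : 0 < 0 + ε)] with t hft hfvt ht
    exact hfvt ▸ hft.hasFDerivAt.comp_hasDerivAt t (hα t ht)
  have hconst : ∀ᶠ t in 𝓝 0, f (α t) = f x₀ := by
    obtain ⟨δ, hδ, hder⟩ := Metric.eventually_nhds_iff_ball.1 hder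
    filter_upwards [ball_mem_nhds 0 hδ] with t ht
    rw [← hα₀]
    exact isOpen_ball.is_const_of_deriv_eq_zero (convex_ball (0 : ℝ) δ).isPreconnected
      (fun t ht ↦ (hder t ht).differentiableAt.differentiableWithinAt)
      (fun t ht ↦ (hder t ht).deriv) ht (mem_ball_self hδ)
  have hαt' : Tendsto α (𝓝[≠] 0) (𝓝[≠] x₀) :=
    tendsto_nhdsWithin_of_tendsto_nhds_of_eventually_within _
      (hαt.mono_left nhdsWithin_le_nhds) (hα'.eventually_ne hv₀)
  exact hαt'.frequently (hconst.filter_mono nhdsWithin_le_nhds).frequently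

end KernelField

theorem exists_frequently_eq_of_det_eq_zero {E : Type*} [NormedAddCommGroup E] [NormedSpace ℂ E]
    [FiniteDimensional ℂ E] {F : E → E} {O : Set E} (hO : IsOpen O) (hne : O.Nonempty)
    (hF : DifferentiableOn ℂ F O) (hdet : ∀ x ∈ O, (fderiv ℂ F x).det = 0) :
    ∃ x ∈ O, ∃ᶠ y in 𝓝[≠] x, F y = F x := by
  have : CompleteSpace E := FiniteDimensional.complete ℂ E
  let nullity : E → ℕ := fun x ↦ finrank ℂ (LinearMap.ker (fderiv ℂ F x : E →ₗ[ℂ] E))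
  obtain ⟨x₀, hx₀, hmin⟩ := (measure nullity).wf.has_min O hne
  have hnear : ∀ᶠ x in 𝓝 x₀, x ∈ O := hO.mem_nhds hx₀
  have hdiff : ∀ᶠ x in 𝓝 x₀, DifferentiableAt ℂ F x :=
    hnear.mono fun x hx ↦ hF.differentiableAt (hO.mem_nhds hx)
  obtain ⟨k, hk, hk0⟩ := Submodule.exists_mem_ne_zero_of_ne_bot
    (LinearMap.bot_lt_ker_of_det_eq_zero (hdet x₀ hx₀)).ne'
  obtain ⟨v, hv, hvk, hvker⟩ := exists_contDiffAt_mem_ker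
    ((contDiffOn_fderiv_of_differentiableOn hO hF).contDiffAt (hO.mem_nhds hx₀))
    (hnear.mono fun x hx ↦ not_lt.1 (hmin x hx)) hk
  refine ⟨x₀, hx₀, frequently_eq_of_fderiv_apply_eq_zero
    (hdiff.mono fun x hx ↦ hx.restrictScalars ℝ) (hv.restrict_scalars ℝ) (hvk ▸ hk0) ?_⟩
  filter_upwards [hdiff, hvker] with x hx hxv
  rwa [hx.fderiv_restrictScalars ℝ]

/-! ### Hausdorff dimension -/

theorem exists_mem_nhds_antilipschitzWith_domRestrict {𝕜 E G : Type*} [NontriviallyNormedField 𝕜]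
    [CompleteSpace 𝕜] [NormedAddCommGroup E] [NormedSpace 𝕜 E] [FiniteDimensional 𝕜 E]
    [NormedAddCommGroup G] [NormedSpace 𝕜 G] {f : E → G} {f' : E →L[𝕜] G} {x : E}
    (hf : HasStrictFDerivAt f f' x) (hinj : Function.Injective f') :
    ∃ s ∈ 𝓝 x, ∃ K, AntilipschitzWith K (s.domRestrict f) := by
  obtain ⟨K, hK, hanti⟩ :=
    LinearMap.exists_antilipschitzWith (f' : E →ₗ[𝕜] G) (LinearMap.ker_eq_bot.2 hinj)
  obtain ⟨c, hc, hcK⟩ := exists_between (inv_pos.2 hK)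
  obtain ⟨s, hs, happ⟩ := hf.approximates_deriv_on_nhds (Or.inr hc)
  exact ⟨s, hs, _, (hanti.domRestrict s).add_sub_lipschitzWith happ.lipschitz_sub hcK⟩

theorem exists_mem_nhdsWithin_dimH_le {E G : Type*} [NormedAddCommGroup E] [NormedSpace ℝ E]
    [FiniteDimensional ℝ E] [NormedAddCommGroup G] [NormedSpace ℝ G] {h : E → G} {h' : E →L[ℝ] G}
    {x : E} (hh : HasStrictFDerivAt h h' x) {S : Set E} {c : G} (hS : ∀ y ∈ S, h y = c) :
    ∃ t ∈ 𝓝[S] x, dimH t ≤ finrank ℝ h'.ker := by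
  obtain ⟨P, hP⟩ := Submodule.ClosedComplemented.of_finiteDimensional h'.ker
  have hinj : Function.Injective (h'.prod P) := by
    refine (injective_iff_map_eq_zero _).2 fun y hy ↦ ?_
    obtain ⟨hy', hPy⟩ := Prod.mk.inj hy
    exact congrArg Subtype.val ((hP ⟨y, hy'⟩).symm.trans hPy)
  obtain ⟨s, hs, K, hK⟩ :=
    exists_mem_nhds_antilipschitzWith_domRestrict (hh.prodMk P.hasStrictFDerivAt) hinj
  refine ⟨s ∩ S, inter_comm s S ▸ inter_mem_nhdsWithin S hs, ?_⟩
  have himage : s.domRestrict (fun y ↦ (h y, P y)) '' (Subtype.val ⁻¹' S) ⊆ range (Prod.mk c) := by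
    rintro - ⟨y, hy, rfl⟩
    exact ⟨P y, congrArg (·, P (y : E)) (hS y hy).symm⟩
  calc dimH (s ∩ S) = dimH (Subtype.val ⁻¹' S : Set s) := by
        rw [← Subtype.image_preimage_val, isometry_subtype_coe.dimH_image]
    _ ≤ dimH (range (Prod.mk c : h'.ker → G × h'.ker)) := (hK.le_dimH_image _).trans
        (dimH_mono himage)
    _ ≤ dimH (univ : Set h'.ker) := (LipschitzWith.prodMk_left c).dimH_range_le
    _ = finrank ℝ h'.ker := Real.dimH_univ_eq_finrank _

theorem dense_setOf_disjoint_segment_add {E : Type*} [NormedAddCommGroup E] [NormedSpace ℝ E]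
    [FiniteDimensional ℝ E] {Z : Set E} (hZ : dimH Z + 1 < finrank ℝ E) (a b : E) :
    Dense {w | Disjoint (segment ℝ (a + w) (b + w)) Z} := by
  let D : Submodule ℝ E := Submodule.span ℝ {b - a}
  have : IsClosed (D : Set E) := D.closed_of_finiteDimensional
  let π : E →L[ℝ] E ⧸ D := D.mkQL
  have hπ : dimH (π '' Z) < finrank ℝ (E ⧸ D) := by
    have hD : finrank ℝ D ≤ 1 := by simpa using finrank_span_le_card (R := ℝ) {b - a}
    have hadd : (finrank ℝ E : ENNReal) ≤ finrank ℝ (E ⧸ D) + 1 := by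
      rw [← D.finrank_quotient_add_finrank]
      exact_mod_cast Nat.add_le_add_left hD _
    exact (π.lipschitz.dimH_image_le Z).trans_lt
      ((ENNReal.add_lt_add_iff_right ENNReal.one_ne_top).1 (hZ.trans_le hadd))
  have hdense : Dense ((fun w ↦ π (a + w)) ⁻¹' (π '' Z)ᶜ) :=
    (dense_compl_of_dimH_lt_finrank hπ).preimage (D.isOpenMap_mkQ.comp (isOpenMap_add_left a))
  refine hdense.mono fun w (hw : π (a + w) ∉ π '' Z) ↦
    disjoint_left.2 fun x hx hxZ ↦ hw ⟨x, hxZ, ?_⟩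
  rw [segment_eq_image'] at hx
  obtain ⟨t, -, rfl⟩ := hx
  refine (Submodule.Quotient.eq D).2 ?_
  rw [add_sub_add_right_eq_sub, add_sub_cancel_left]
  exact D.smul_mem t (Submodule.mem_span_singleton_self _)

theorem isPreconnected_diff_of_dimH_lt {E : Type*} [NormedAddCommGroup E] [NormedSpace ℝ E]
    [FiniteDimensional ℝ E] {N Z : Set E} (hN : IsOpen N) (hNc : Convex ℝ N)
    (hZ : dimH Z + 1 < finrank ℝ E) : IsPreconnected (N \ Z) := by
  rintro u v hu hv hcover ⟨a, ⟨haN, -⟩, hau⟩ ⟨b, ⟨hbN, -⟩, hbv⟩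
  have hopen : IsOpen {w | a + w ∈ N ∩ u ∧ b + w ∈ N ∩ v} :=
    ((hN.inter hu).preimage (by fun_prop)).inter ((hN.inter hv).preimage (by fun_prop))
  obtain ⟨w, hwZ, ⟨haN', hau'⟩, hbN', hbv'⟩ :=
    (dense_setOf_disjoint_segment_add hZ a b).exists_mem_open hopen
      ⟨0, by simpa using ⟨⟨haN, hau⟩, hbN, hbv⟩⟩
  have hseg : segment ℝ (a + w) (b + w) ⊆ N \ Z :=
    subset_sdiff.2 ⟨hNc.segment_subset haN' hbN', hwZ⟩
  exact ((convex_segment _ _).isPreconnected u v hu hv (hseg.trans hcover)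
    ⟨_, left_mem_segment ℝ _ _, hau'⟩ ⟨_, right_mem_segment ℝ _ _, hbv'⟩).mono
    (inter_subset_inter_left _ hseg)

/-! ### Zero sets of holomorphic functions -/

section ZeroSet

variable {E G : Type*} [NormedAddCommGroup E] [NormedSpace ℂ E] [NormedAddCommGroup G]
  [NormedSpace ℂ G]

/-- The `j`-th iterated directional derivative of `g` along the fixed vector `v`; at `x` these are,
up to factorials, the Taylor coefficients of `g` on the complex line `x + ℂ v`. -/
noncomputable def iteratedDirDeriv (v : E) (j : ℕ) (g : E → G) : E → G :=
  (fun h x ↦ fderiv ℂ h x v)^[j] g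

theorem iteratedDirDeriv_succ (v : E) (j : ℕ) (g : E → G) :
    iteratedDirDeriv v (j + 1) g = fun x ↦ fderiv ℂ (iteratedDirDeriv v j g) x v :=
  Function.iterate_succ_apply' _ _ _

theorem finrank_real_ker_le_of_ne_zero [FiniteDimensional ℂ E] {L : E →L[ℂ] G} (hL : L ≠ 0) :
    finrank ℝ (L.restrictScalars ℝ).ker ≤ finrank ℝ E - 2 := by
  have hker : L.ker ≠ ⊤ := fun h ↦
    hL (ContinuousLinearMap.coe_inj.1 (LinearMap.ker_eq_top.1 h))
  have hlt := Submodule.finrank_lt hker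
  have hreal : finrank ℝ (L.restrictScalars ℝ).ker = 2 * finrank ℂ L.ker :=
    finrank_real_of_complex L.ker
  rw [hreal, finrank_real_of_complex]
  omega

variable [CompleteSpace G] {g : E → G} {U : Set E}

theorem differentiableOn_iteratedDirDeriv (hU : IsOpen U) (hg : DifferentiableOn ℂ g U) (v : E)
    (j : ℕ) : DifferentiableOn ℂ (iteratedDirDeriv v j g) U := by
  induction j with
  | zero => exact hg
  | succ j ih =>
    rw [iteratedDirDeriv_succ]
    exact differentiableOn_fderiv_apply hU ih v

theorem iteratedDeriv_comp_line (hU : IsOpen U) (hg : DifferentiableOn ℂ g U) (x v : E) (j : ℕ)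
    {t : ℂ} (ht : x + t • v ∈ U) :
    iteratedDeriv j (fun s : ℂ ↦ g (x + s • v)) t = iteratedDirDeriv v j g (x + t • v) := by
  induction j generalizing t with
  | zero => rfl
  | succ j ih =>
    have hline : HasDerivAt (fun s : ℂ ↦ x + s • v) v t := by
      simpa using ((hasDerivAt_id t).smul_const v).const_add x
    have hnear : ∀ᶠ s in 𝓝 t, x + s • v ∈ U := hline.continuousAt (hU.mem_nhds ht)
    have hdiff := (differentiableOn_iteratedDirDeriv hU hg v j).differentiableAt (hU.mem_nhds ht)
    rw [iteratedDeriv_succ, EventuallyEq.deriv_eq (hnear.mono fun s hs ↦ ih hs),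
      iteratedDirDeriv_succ]
    exact (hdiff.hasFDerivAt.comp_hasDerivAt t hline).deriv

theorem eq_zero_of_iteratedDirDeriv_eq_zero {x v : E} {R : ℝ}
    (hg : DifferentiableOn ℂ g (ball x R)) (hv : ‖v‖ < R)
    (h₀ : ∀ j, iteratedDirDeriv v j g x = 0) : g (x + v) = 0 := by
  rcases eq_or_ne v 0 with rfl | hv₀
  · rw [add_zero]
    exact h₀ 0
  have hnorm : 0 < ‖v‖ := norm_pos_iff.2 hv₀
  have hmem : MapsTo (fun t : ℂ ↦ x + t • v) (ball 0 (R / ‖v‖)) (ball x R) := by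
    intro t ht
    rwa [mem_ball_zero_iff, lt_div_iff₀ hnorm, ← norm_smul, ← add_mem_ball_iff_norm] at ht
  have hsum := Complex.hasSum_taylorSeries_on_ball (z := 1)
    (hg.comp (by fun_prop : Differentiable ℂ fun t : ℂ ↦ x + t • v).differentiableOn hmem)
    (by simpa using (one_lt_div hnorm).2 hv)
  have hcoeff (n : ℕ) : iteratedDeriv n (g ∘ fun t : ℂ ↦ x + t • v) 0 = 0 := by
    have hx : x + (0 : ℂ) • v ∈ ball x R := by simpa using hnorm.trans hv
    refine (iteratedDeriv_comp_line isOpen_ball hg x v n hx).trans ?_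
    rw [zero_smul, add_zero, h₀ n]
  simp only [hcoeff, smul_zero] at hsum
  simpa using hsum.unique hasSum_zero

theorem exists_iteratedDirDeriv_ne_zero (hU : IsOpen U) (hg : DifferentiableOn ℂ g U) {x : E}
    (hx : x ∈ U) (hne : ∃ᶠ y in 𝓝 x, g y ≠ 0) {ι : Type*} {u : ι → E} (hu : DenseRange u) :
    ∃ i j, iteratedDirDeriv (u i) j g x ≠ 0 := by
  obtain ⟨R, hR, hRU⟩ := Metric.isOpen_iff.1 hU x hx
  have hopen : IsOpen {y ∈ ball x R | g y ≠ 0} :=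
    (hg.continuousOn.mono hRU).isOpen_inter_preimage isOpen_ball isOpen_compl_singleton
  obtain ⟨y, hy, hyR⟩ := (hne.and_eventually (ball_mem_nhds x hR)).exists
  obtain ⟨i, hiR, hi⟩ := hu.exists_mem_open
    (hopen.preimage (by fun_prop : Continuous fun v : E ↦ x + v))
    ⟨y - x, by simpa using ⟨mem_ball_iff_norm.1 hyR, hy⟩⟩
  refine ⟨i, not_forall.1 fun h ↦ hi ?_⟩
  exact eq_zero_of_iteratedDirDeriv_eq_zero (hg.mono hRU) (by simpa using hiR) h

-- Every zero is a point where some iterated directional derivative, along one of countably many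
-- directions, vanishes to first order; there its zero set lies in a real codimension-two set.
theorem dimH_zeroSet_le [FiniteDimensional ℂ E] (hU : IsOpen U) (hg : DifferentiableOn ℂ g U)
    (hne : ∀ x ∈ U, ∃ᶠ y in 𝓝 x, g y ≠ 0) :
    dimH {x ∈ U | g x = 0} ≤ (finrank ℝ E - 2 : ℕ) := by
  have : ProperSpace E := FiniteDimensional.proper ℂ E
  let u : ℕ → E := TopologicalSpace.denseSeq E
  let S (i j : ℕ) : Set E :=
    {x ∈ U | iteratedDirDeriv (u i) j g x = 0 ∧ iteratedDirDeriv (u i) (j + 1) g x ≠ 0}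
  have hcover : {x ∈ U | g x = 0} ⊆ ⋃ i, ⋃ j, S i j := by
    rintro x ⟨hx, hgx⟩
    obtain ⟨i, hi⟩ := exists_iteratedDirDeriv_ne_zero hU hg hx (hne x hx)
      (TopologicalSpace.denseRange_denseSeq E)
    obtain ⟨j, hj₀, hj⟩ := Nat.exists_not_and_succ_of_not_zero_of_exists
      (p := fun j ↦ iteratedDirDeriv (u i) j g x ≠ 0) (not_not.2 hgx) hi
    exact mem_iUnion₂.2 ⟨i, j, hx, not_not.1 hj₀, hj⟩
  refine (dimH_mono hcover).trans ?_
  simp only [dimH_iUnion, iSup_le_iff]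
  intro i j
  by_contra! hlt
  obtain ⟨x, ⟨hxU, -, hx⟩, hxt⟩ := exists_mem_nhdsWithin_lt_dimH_of_lt_dimH hlt
  have hstrict := hasStrictFDerivAt_of_differentiableOn hU
    (differentiableOn_iteratedDirDeriv hU hg (u i) j) hxU
  have hderiv : fderiv ℂ (iteratedDirDeriv (u i) j g) x ≠ 0 := fun h ↦
    hx (by simp [iteratedDirDeriv_succ, h])
  obtain ⟨t, ht, htdim⟩ := exists_mem_nhdsWithin_dimH_le (hstrict.restrictScalars ℝ)
    (S := S i j) fun y hy ↦ hy.2.1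
  refine (hxt t ht).not_ge (htdim.trans ?_)
  exact_mod_cast finrank_real_ker_le_of_ne_zero hderiv

end ZeroSet

/-! ### Openness of holomorphic maps with discrete fibers -/

theorem contDiff_continuousLinearMap_det {𝕜 E : Type*} [NontriviallyNormedField 𝕜]
    [CompleteSpace 𝕜] [NormedAddCommGroup E] [NormedSpace 𝕜 E] [FiniteDimensional 𝕜 E]
    {n : WithTop ℕ∞} : ContDiff 𝕜 n fun A : E →L[𝕜] E ↦ A.det := by
  let b := finBasis 𝕜 E
  have hentry (i j : Fin (finrank 𝕜 E)) :
      ContDiff 𝕜 n fun A : E →L[𝕜] E ↦ LinearMap.toMatrix b b A i j := by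
    simp only [LinearMap.toMatrix_apply]
    exact (LinearMap.toContinuousLinearMap (b.coord i)).contDiff.comp
      (contDiff_id.clm_apply contDiff_const)
  simp only [ContinuousLinearMap.det, ← LinearMap.det_toMatrix b, Matrix.det_apply]
  exact ContDiff.sum fun σ _ ↦ (contDiff_prod fun i _ ↦ hentry (σ i) i).const_smul _

theorem eventually_ne_of_isDiscrete_fiber {X Y : Type*} [TopologicalSpace X] {f : X → Y}
    {U : Set X} (hU : IsOpen U) {x : X} (hx : x ∈ U) (hdisc : IsDiscrete (U ∩ f ⁻¹' {f x})) :
    ∀ᶠ y in 𝓝[≠] x, f y ≠ f x := by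
  have hbot := isDiscrete_iff_nhdsNE.1 hdisc x ⟨hx, rfl⟩
  have hfiber : ∀ᶠ y in 𝓝[≠] x, y ∉ U ∩ f ⁻¹' {f x} := by
    rwa [← compl_compl (U ∩ f ⁻¹' {f x}), ← mem_iff_inf_principal_compl] at hbot
  filter_upwards [hfiber, nhdsWithin_le_nhds (hU.mem_nhds hx)] with y hy hyU hfy
  exact hy ⟨hyU, hfy⟩

section OpenMapping

variable {E : Type*} [NormedAddCommGroup E] [NormedSpace ℂ E] [FiniteDimensional ℂ E]
  {F : E → E} {U : Set E}

theorem frequently_det_fderiv_ne_zero (hU : IsOpen U) (hF : DifferentiableOn ℂ F U)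
    (hisol : ∀ x ∈ U, ∀ᶠ y in 𝓝[≠] x, F y ≠ F x) :
    ∀ x ∈ U, ∃ᶠ y in 𝓝 x, (fderiv ℂ F y).det ≠ 0 := by
  intro x hx hdet
  obtain ⟨ε, hε, hball⟩ := Metric.eventually_nhds_iff_ball.1 (hdet.and (hU.eventually_mem hx))
  obtain ⟨y, hy, hfreq⟩ := exists_frequently_eq_of_det_eq_zero isOpen_ball (nonempty_ball.2 hε)
    (hF.mono fun z hz ↦ (hball z hz).2) fun z hz ↦ not_not.1 (hball z hz).1
  exact hfreq (hisol y (hball y hy).2)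

theorem dimH_criticalValues_add_one_lt [Nontrivial E] (hU : IsOpen U)
    (hF : DifferentiableOn ℂ F U) (hfreq : ∀ x ∈ U, ∃ᶠ y in 𝓝 x, (fderiv ℂ F y).det ≠ 0) :
    dimH (F '' {x ∈ U | (fderiv ℂ F x).det = 0}) + 1 < finrank ℝ E := by
  have : CompleteSpace E := FiniteDimensional.complete ℂ E
  have : ProperSpace E := FiniteDimensional.proper ℂ E
  have hdet : DifferentiableOn ℂ (fun x ↦ (fderiv ℂ F x).det) U :=
    (contDiff_continuousLinearMap_det.comp_contDiffOn
      (contDiffOn_fderiv_of_differentiableOn hU hF)).differentiableOn one_ne_zero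
  have himage : dimH (F '' {x ∈ U | (fderiv ℂ F x).det = 0}) ≤
      dimH {x ∈ U | (fderiv ℂ F x).det = 0} := by
    refine dimH_image_le_of_locally_lipschitzOn fun x hx ↦ ?_
    obtain ⟨C, s, hs, hC⟩ :=
      (hasStrictFDerivAt_of_differentiableOn hU hF hx.1).exists_lipschitzOnWith
    exact ⟨C, s, mem_nhdsWithin_of_mem_nhds hs, hC⟩
  calc dimH (F '' {x ∈ U | (fderiv ℂ F x).det = 0}) + 1
      ≤ (finrank ℝ E - 2 : ℕ) + 1 := by
        gcongr
        exact himage.trans (dimH_zeroSet_le hU hdet hfreq)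
    _ < finrank ℝ E := by
        have hpos : 0 < finrank ℂ E := finrank_pos
        rw [finrank_real_of_complex]
        exact_mod_cast (by omega : 2 * finrank ℂ E - 2 + 1 < 2 * finrank ℂ E)

theorem map_nhds_eq_of_det_fderiv_ne_zero (hU : IsOpen U) (hF : DifferentiableOn ℂ F U) {x : E}
    (hx : x ∈ U) (hdet : (fderiv ℂ F x).det ≠ 0) : map F (𝓝 x) = 𝓝 (F x) := by
  have : CompleteSpace E := FiniteDimensional.complete ℂ E
  refine (hasStrictFDerivAt_of_differentiableOn hU hF hx).map_nhds_eq_of_surj ?_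
  rw [← LinearMap.ker_eq_bot_iff_range_eq_top]
  exact not_not.1 fun h ↦ hdet (LinearMap.det_eq_zero_iff_ker_ne_bot.2 h)

theorem subset_of_isPreconnected_diff {X : Type*} [TopologicalSpace X] {N K Z : Set X}
    (hconn : IsPreconnected (N \ Z)) (hK : IsClosed K) (hZK : Z ⊆ K)
    (hint : (N ∩ K) \ Z ⊆ interior K) (hne : ((N \ Z) ∩ interior K).Nonempty) : N ⊆ K := by
  have hcover : N \ Z ⊆ interior K ∪ Kᶜ := fun y hy ↦
    or_iff_not_imp_right.2 fun hyK ↦ hint ⟨⟨hy.1, not_not.1 hyK⟩, hy.2⟩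
  have hsub := hconn.subset_left_of_subset_union isOpen_interior hK.isOpen_compl
    (disjoint_compl_right.mono_left interior_subset) hcover hne
  exact (sdiff_subset_iff.1 (hsub.trans interior_subset)).trans (union_subset hZK subset_rfl)

theorem image_closedBall_mem_nhds (hU : IsOpen U) (hF : DifferentiableOn ℂ F U)
    (hfreq : ∀ x ∈ U, ∃ᶠ y in 𝓝 x, (fderiv ℂ F y).det ≠ 0) {x₀ : E} {ρ : ℝ} (hρ : 0 < ρ)
    (hρU : closedBall x₀ ρ ⊆ U) (hsphere : F x₀ ∉ F '' sphere x₀ ρ) :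
    F '' closedBall x₀ ρ ∈ 𝓝 (F x₀) := by
  rcases subsingleton_or_nontrivial E with _ | _
  · exact (isOpen_discrete _).mem_nhds (mem_image_of_mem F (mem_closedBall_self hρ.le))
  have : ProperSpace E := FiniteDimensional.proper ℂ E
  have hcont : ContinuousOn F (closedBall x₀ ρ) := hF.continuousOn.mono hρU
  have hclosed : IsClosed (F '' closedBall x₀ ρ) :=
    ((isCompact_closedBall x₀ ρ).image_of_continuousOn hcont).isClosed
  have hsphereClosed : IsClosed (F '' sphere x₀ ρ) :=
    ((isCompact_sphere x₀ ρ).image_of_continuousOn (hcont.mono sphere_subset_closedBall)).isClosed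
  obtain ⟨δ, hδ, hδsphere⟩ := Metric.isOpen_iff.1 hsphereClosed.isOpen_compl _ hsphere
  have hballU : ball x₀ ρ ⊆ U := ball_subset_closedBall.trans hρU
  let Z : Set E := F '' {x ∈ ball x₀ ρ | (fderiv ℂ F x).det = 0}
  have hZ : dimH Z + 1 < finrank ℝ E :=
    dimH_criticalValues_add_one_lt isOpen_ball (hF.mono hballU) fun x hx ↦ hfreq x (hballU hx)
  have hregular : ∀ x ∈ ball x₀ ρ, (fderiv ℂ F x).det ≠ 0 →
      F x ∈ interior (F '' closedBall x₀ ρ) := by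
    intro x hx hdet
    rw [mem_interior_iff_mem_nhds, ← map_nhds_eq_of_det_fderiv_ne_zero hU hF (hballU hx) hdet]
    exact image_mem_map (mem_of_superset (isOpen_ball.mem_nhds hx) ball_subset_closedBall)
  refine mem_of_superset (ball_mem_nhds _ hδ) (subset_of_isPreconnected_diff
    (isPreconnected_diff_of_dimH_lt isOpen_ball (convex_ball _ _) hZ) hclosed
    (image_mono fun x hx ↦ ball_subset_closedBall hx.1) ?_ ?_)
  · rintro - ⟨⟨hFx, x, hx, rfl⟩, hFxZ⟩
    have hxball : x ∈ ball x₀ ρ := (mem_closedBall.1 hx).lt_of_ne fun h ↦ hδsphere hFx ⟨x, h, rfl⟩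
    exact hregular x hxball fun h ↦ hFxZ ⟨x, ⟨hxball, h⟩, rfl⟩
  · have hFball : ∀ᶠ x in 𝓝 x₀, F x ∈ ball (F x₀) δ :=
      (hcont.continuousAt (closedBall_mem_nhds x₀ hρ)).eventually_mem (ball_mem_nhds _ hδ)
    obtain ⟨x, hdet, hFx, hx⟩ := ((hfreq x₀ (hρU (mem_closedBall_self hρ.le))).and_eventually
      (hFball.and (ball_mem_nhds x₀ hρ))).exists
    obtain ⟨y, hyZ, hyball, hyint⟩ := (dense_compl_of_dimH_lt_finrank
      (le_self_add.trans_lt hZ)).exists_mem_open (isOpen_ball.inter isOpen_interior)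
      ⟨F x, hFx, hregular x hx hdet⟩
    exact ⟨y, ⟨hyball, hyZ⟩, hyint⟩

theorem isOpen_image_of_eventually_ne (hU : IsOpen U) (hF : DifferentiableOn ℂ F U)
    (hisol : ∀ x ∈ U, ∀ᶠ y in 𝓝[≠] x, F y ≠ F x) : IsOpen (F '' U) := by
  rw [isOpen_iff_mem_nhds]
  rintro - ⟨x, hx, rfl⟩
  obtain ⟨ρ, hρ, hsub⟩ := Metric.nhds_basis_closedBall.mem_iff.1
    ((hU.eventually_mem hx).and (eventually_nhdsWithin_iff.1 (hisol x hx)))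
  have hρU : closedBall x ρ ⊆ U := fun y hy ↦ (hsub hy).1
  refine mem_of_superset (image_closedBall_mem_nhds hU hF
    (frequently_det_fderiv_ne_zero hU hF hisol) hρ hρU ?_) (image_mono hρU)
  rintro ⟨y, hy, hyx⟩
  exact (hsub (sphere_subset_closedBall hy)).2 (ne_of_mem_sphere hy hρ.ne') hyx

end OpenMapping

/-! ### Dense orbits of equicontinuous iterates -/

theorem equicontinuousOn_of_mapsTo_isBounded {E G ι : Type*} [NormedAddCommGroup E]
    [NormedSpace ℂ E] [NormedAddCommGroup G] [NormedSpace ℂ G] {f : ι → E → G} {U : Set E}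
    {B : Set G} (hU : IsOpen U) (hB : Bornology.IsBounded B)
    (hf : ∀ i, DifferentiableOn ℂ (f i) U) (hmaps : ∀ i, MapsTo (f i) U B) :
    EquicontinuousOn f U := by
  intro x hx
  obtain ⟨R, hR, hRU⟩ := Metric.isOpen_iff.1 hU x hx
  refine EquicontinuousAt.equicontinuousWithinAt ?_ _
  refine Metric.equicontinuousAt_of_continuity_modulus (fun y ↦ diam B / R * dist y x)
    (Continuous.tendsto' (by fun_prop) _ _ (by simp)) f ?_
  filter_upwards [ball_mem_nhds x hR] with y hy i
  rw [dist_comm]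
  exact Complex.dist_le_div_mul_dist_of_mapsTo_ball ((hf i).mono hRU)
    (fun z hz ↦ dist_le_diam_of_mem hB (hmaps i (hRU hz)) (hmaps i hx)) hy

theorem mapClusterPt_of_mem_interior_closure_range {X : Type*} [TopologicalSpace X] [T1Space X]
    [PerfectSpace X] {p : ℕ → X} {x : X} (hx : x ∈ interior (closure (range p))) :
    MapClusterPt x atTop p := by
  refine mapClusterPt_atTop_iff_forall_mem_closure.2 fun N ↦ ?_
  have hfin : (p '' Iio N).Finite := (finite_Iio N).image p
  have hsplit : closure (range p) = p '' Iio N ∪ closure (p '' Ici N) := by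
    rw [← hfin.isClosed.closure_eq, ← closure_union, ← image_union, Iio_union_Ici, image_univ]
  refine closure_minimal ?_ isClosed_closure
    ((dense_univ.sdiff_finite hfin).open_subset_closure_inter isOpen_interior hx)
  rintro y ⟨hy, -, hyN⟩
  exact (hsplit ▸ interior_subset hy).resolve_left hyN

theorem mapClusterPt_iterate_of_equicontinuousAt {X : Type*} [UniformSpace X] {f : X → X}
    {x₀ x y : X} (hf : EquicontinuousAt (fun n ↦ f^[n]) x)
    (hx : MapClusterPt x atTop fun n ↦ f^[n] x₀) (hy : MapClusterPt y atTop fun n ↦ f^[n] x₀) :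
    MapClusterPt y atTop fun n ↦ f^[n] x := by
  refine mapClusterPt_iff_frequently.2 fun s hs ↦ ?_
  obtain ⟨V, hV, -, hVs⟩ := UniformSpace.mem_nhds_iff_symm.1 hs
  obtain ⟨V', hV', hV'symm, hV'V⟩ := comp_symm_mem_uniformity_sets hV
  obtain ⟨k, hk⟩ := (hx.frequently (hf V' hV')).exists
  have hreturn : ∃ᶠ n in atTop, f^[n + k] x₀ ∈ UniformSpace.ball y V' := by
    rw [← frequently_map (m := (· + k)) (P := fun n ↦ f^[n] x₀ ∈ UniformSpace.ball y V'),
      map_add_atTop_eq_nat]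
    exact hy.frequently (UniformSpace.ball_mem_nhds y hV')
  refine hreturn.mono fun n hn ↦ hVs (hV'V ⟨_, hn, SetRel.symm V' ?_⟩)
  rw [Function.iterate_add_apply]
  exact hk n

theorem exists_isCompact_iterate_mem {X : Type*} [TopologicalSpace X] {f : X → X}
    (hf : Continuous f) {K : Set X} (hK : IsCompact K)
    (hreturn : ∀ x ∈ K, ∃ n, 0 < n ∧ f^[n] x ∈ interior K) :
    ∃ C, IsCompact C ∧ ∀ x ∈ K, ∀ n, f^[n] x ∈ C := by
  obtain ⟨t, ht⟩ := hK.elim_finite_subcover (fun j : ℕ ↦ f^[j + 1] ⁻¹' interior K)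
    (fun j ↦ isOpen_interior.preimage (hf.iterate _)) fun x hx ↦ by
      obtain ⟨n, hn, hnK⟩ := hreturn x hx
      exact mem_iUnion.2 ⟨n - 1, by rwa [Nat.sub_add_cancel hn]⟩
  let T := t.sup id + 1
  refine ⟨⋃ i ∈ Iic T, f^[i] '' K,
    (finite_Iic T).isCompact_biUnion fun i _ ↦ hK.image (hf.iterate i), fun x hx n ↦ ?_⟩
  induction n using Nat.strong_induction_on generalizing x with
  | h n ih =>
    rcases le_or_gt n T with hnT | hnT
    · exact mem_biUnion hnT (mem_image_of_mem _ hx)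
    · obtain ⟨j, hjt, hj⟩ := mem_iUnion₂.1 (ht hx)
      have hjT : j + 1 ≤ T := Nat.succ_le_succ (Finset.le_sup (f := id) hjt)
      have hrest := ih (n - (j + 1)) (by omega) _ (interior_subset hj)
      rwa [← Function.iterate_add_apply, Nat.sub_add_cancel (hjT.trans hnT.le)] at hrest

theorem compactSpace_of_equicontinuous_iterate {X : Type*} [UniformSpace X]
    [WeaklyLocallyCompactSpace X] {f : X → X} (hf : Equicontinuous fun n ↦ f^[n]) {x₀ : X}
    (hx₀ : ∀ x, MapClusterPt x atTop fun n ↦ f^[n] x₀) : CompactSpace X := by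
  obtain ⟨K, hK, hKx₀⟩ := exists_compact_mem_nhds x₀
  have hreturn : ∀ x ∈ K, ∃ n, 0 < n ∧ f^[n] x ∈ interior K := fun x _ ↦
    frequently_atTop'.1 ((mapClusterPt_iterate_of_equicontinuousAt (hf x) (hx₀ x)
      (hx₀ x₀)).frequently (interior_mem_nhds.2 hKx₀)) 0
  obtain ⟨C, hC, hCK⟩ := exists_isCompact_iterate_mem (hf.continuous 1) hK hreturn
  have huniv : closure C = univ := eq_univ_of_forall fun x ↦
    isClosed_closure.mem_of_mapClusterPt (hx₀ x)
      (.of_forall fun n ↦ subset_closure (hCK x₀ (mem_of_mem_nhds hKx₀) n))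
  exact ⟨huniv ▸ hC.closure⟩

theorem not_subset_closure_range_of_mapsTo {E : Type*} [NormedAddCommGroup E] [NormedSpace ℂ E]
    [FiniteDimensional ℂ E] [Nontrivial E] {F : E → E} {W : Set E} (hW : IsOpen W)
    (hne : W.Nonempty) (hbdd : Bornology.IsBounded W) (hF : DifferentiableOn ℂ F W)
    (hFW : MapsTo F W W) {p : ℕ → E} (hp : ∀ n, F (p n) = p (n + 1)) :
    ¬ W ⊆ closure (range p) := by
  intro hdense
  have : ProperSpace E := FiniteDimensional.proper ℂ E
  have : PerfectSpace E := perfectSpace_of_module ℂ E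
  have : NoncompactSpace E := NormedSpace.noncompactSpace ℂ E
  have : LocallyCompactSpace W := hW.locallyCompactSpace
  obtain ⟨x, hx⟩ := hne
  obtain ⟨_, hNW, N, rfl⟩ := _root_.mem_closure_iff.1 (hdense hx) W hW hx
  have horbit (n : ℕ) : F^[n] (p N) = p (n + N) := by
    induction n with
    | zero => rw [zero_add, Function.iterate_zero_apply]
    | succ n ih => rw [Function.iterate_succ_apply', ih, hp, Nat.add_right_comm]
  have hcluster (x : W) : MapClusterPt x atTop fun n ↦ (hFW.restrict F W W)^[n] ⟨p N, hNW⟩ := by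
    have hp' := mapClusterPt_of_mem_interior_closure_range (interior_maximal hdense hW x.2)
    rw [← map_add_atTop_eq_nat N, ← mapClusterPt_comp] at hp'
    refine IsInducing.subtypeVal.mapClusterPt_iff.1 (mapClusterPt_comp.1 ?_)
    simpa only [Function.comp_def, MapsTo.coe_iterate_restrict, horbit] using hp'
  have hequi : Equicontinuous fun n ↦ (hFW.restrict F W W)^[n] := by
    simp only [IsUniformInducing.equicontinuous_iff
      isUniformEmbedding_subtype_val.isUniformInducing, MapsTo.iterate_restrict]
    exact (equicontinuous_restrict_iff _).2 <| equicontinuousOn_of_mapsTo_isBounded hW hbdd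
      (fun n ↦ hF.iterate hFW n) fun n ↦ hFW.iterate n
  have hcompact : IsCompact W :=
    isCompact_iff_compactSpace.2 (compactSpace_of_equicontinuous_iterate hequi hcluster)
  have huniv : W = univ := IsClopen.eq_univ ⟨hcompact.isClosed, hW⟩ ⟨x, hx⟩
  exact noncompact_univ E (huniv ▸ hcompact)

theorem mapsTo_interior_closure_range {X : Type*} [TopologicalSpace X] {F : X → X} {p : ℕ → X}
    (hp : ∀ n, F (p n) = p (n + 1)) (hF : ContinuousOn F (interior (closure (range p))))
    (hopen : IsOpen (F '' interior (closure (range p)))) :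
    MapsTo F (interior (closure (range p))) (interior (closure (range p))) := by
  refine mapsTo_iff_image_subset.2 (interior_maximal ?_ hopen)
  rintro _ ⟨x, hx, rfl⟩
  refine closure_mono ?_ (mem_closure_image (hF.continuousAt (isOpen_interior.mem_nhds hx))
    (interior_subset hx))
  rintro _ ⟨_, ⟨n, rfl⟩, rfl⟩
  exact ⟨n + 1, (hp n).symm⟩

theorem no_dense_orbit_of_discrete_fibers_general {E : Type*} [NormedAddCommGroup E]
    [NormedSpace ℂ E] [FiniteDimensional ℂ E] [Nontrivial E] {Ω : Set E}
    (hbdd : Bornology.IsBounded Ω) (hreg : interior (closure Ω) ⊆ Ω) {F : E → E}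
    (hF : DifferentiableOn ℂ F Ω) (hdisc : ∀ q, IsDiscrete (Ω ∩ F ⁻¹' {q})) {p : ℕ → E}
    (hpΩ : ∀ n, p n ∈ Ω) (hp : ∀ n, F (p n) = p (n + 1)) : IsNowhereDense (range p) := by
  by_contra hdense
  let W := interior (closure (range p))
  have hWΩ : W ⊆ Ω := (interior_mono (closure_mono (range_subset_iff.2 hpΩ))).trans hreg
  have hFdiff : DifferentiableOn ℂ F W := hF.mono hWΩ
  have hopen : IsOpen (F '' W) :=
    isOpen_image_of_eventually_ne isOpen_interior hFdiff fun x hx ↦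
      eventually_ne_of_isDiscrete_fiber isOpen_interior hx
        ((hdisc (F x)).mono (inter_subset_inter_left _ hWΩ))
  have hFW : MapsTo F W W := mapsTo_interior_closure_range hp hFdiff.continuousOn hopen
  exact not_subset_closure_range_of_mapsTo isOpen_interior (nonempty_iff_ne_empty.2 hdense)
    (hbdd.subset hWΩ) hFdiff hFW hp interior_subset

/-- **Remark 5.4.** Let `Ω ⊆ ℂ^m` (`m ≥ 1`) be a bounded domain with
`Ω = int(cl(Ω))`, and let `F` be holomorphic on `Ω` with discrete fibers.  Then `F` has no
orbit whose intersection with some nonempty open `V ⊆ Ω` is dense in `V`. -/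
theorem no_dense_orbit_of_discrete_fibers {m : ℕ} (hm : 0 < m)
    (Ω : Set (EuclideanSpace ℂ (Fin m)))
    (hΩopen : IsOpen Ω) (hΩconn : IsConnected Ω) (hΩbdd : Bornology.IsBounded Ω)
    (hreg : Ω = interior (closure Ω))
    (F : EuclideanSpace ℂ (Fin m) → EuclideanSpace ℂ (Fin m))
    (hF : DifferentiableOn ℂ F Ω)
    (hdisc : ∀ q : EuclideanSpace ℂ (Fin m), ∀ z ∈ Ω ∩ F ⁻¹' {q},
      ∃ W ∈ nhds z, W ∩ (Ω ∩ F ⁻¹' {q}) = {z}) :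
    ¬ ∃ (V : Set (EuclideanSpace ℂ (Fin m))) (p : ℕ → EuclideanSpace ℂ (Fin m)),
        IsOpen V ∧ V.Nonempty ∧ V ⊆ Ω ∧
        (∀ n, p n ∈ Ω) ∧ (∀ n, F (p n) = p (n + 1)) ∧
        V ⊆ closure (Set.range p ∩ V) := by
  rintro ⟨V, p, hV, hVne, -, hpΩ, hp, hdense⟩
  have : Nonempty (Fin m) := ⟨⟨0, hm⟩⟩
  have hfiber (q : EuclideanSpace ℂ (Fin m)) : IsDiscrete (Ω ∩ F ⁻¹' {q}) := by
    refine .of_nhdsWithin fun z hz ↦ le_pure_iff.2 ?_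
    obtain ⟨S, hS, hSz⟩ := hdisc q z hz
    exact hSz ▸ inter_mem (mem_nhdsWithin_of_mem_nhds hS) self_mem_nhdsWithin
  have hVint : V ⊆ interior (closure (range p)) :=
    interior_maximal (hdense.trans (closure_mono inter_subset_left)) hV
  exact (hVne.mono hVint).ne_empty
    (no_dense_orbit_of_discrete_fibers_general hΩbdd hreg.ge hF hfiber hpΩ hp)
end
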